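/- For every β ≥ 0, the finite Hilbert transform T maps L(log L)^{1+β}(-1,1) boundedly into L(log L)^{β}(-1,1); that is, there is a constant C_β > 0 such that ‖T(f)‖_{L(log L)^{β}} ≤ C_β ‖f‖_{L(log L)^{1+β}} for all f ∈ L(log L)^{1+β}(-1,1). -/

import Mathlib

open MeasureTheory Set Filter

noncomputable section

/-- Lebesgue measure restricted to the interval `(-1, 1)`. -/
def μI : Measure ℝ := volume.restrict (Set.Ioo (-1 : ℝ) 1)

/-- The finite Hilbert transform: the principal-value limit
`T(f)(t) = lim_{ε→0⁺} (1/π) ∫_{x∈(-1,1), |x-t|≥ε} f(x)/(x-t) dx`. -/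
def FHT (f : ℝ → ℂ) (t : ℝ) : ℂ :=
  limUnder (nhdsWithin (0 : ℝ) (Set.Ioi 0)) fun ε : ℝ =>
    (Real.pi : ℂ)⁻¹ *
      ∫ x in {x : ℝ | x ∈ Set.Ioo (-1 : ℝ) 1 ∧ ε ≤ |x - t|}, f x / ((x : ℂ) - (t : ℂ))

/-- The operator `T̂(g)(x) = -(1-x²)^{-1/2} T(t ↦ √(1-t²) g(t))(x)`. -/
def hatT (g : ℝ → ℂ) (x : ℝ) : ℂ :=
  -((Real.sqrt (1 - x ^ 2) : ℂ))⁻¹ * FHT (fun t => (Real.sqrt (1 - t ^ 2) : ℂ) * g t) x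

/-- Membership in the Zygmund space `L log L(-1,1)`:
`f` is a.e. measurable on `(-1,1)` and `∫ |f| log⁺|f| < ∞`. -/
def MemLlogL (f : ℝ → ℂ) : Prop :=
  AEStronglyMeasurable f μI ∧
    IntegrableOn (fun x => ‖f x‖ * max (Real.log ‖f x‖) 0) (Set.Ioo (-1 : ℝ) 1)

/-- The distribution function `λ ↦ |{x ∈ (-1,1) : |f(x)| > λ}|`. -/
def distFun (f : ℝ → ℂ) (lam : ℝ) : ℝ :=
  (volume {x : ℝ | x ∈ Set.Ioo (-1 : ℝ) 1 ∧ lam < ‖f x‖}).toReal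

/-- The decreasing rearrangement `f*` of `f`, a function on `(0,2)`. -/
def decRearr (f : ℝ → ℂ) (t : ℝ) : ℝ :=
  sInf {lam : ℝ | 0 ≤ lam ∧ distFun f lam ≤ t}

/-- The `L log L` norm `‖f‖ = ∫_0^2 f*(t) log(2e/t) dt`. -/
def llogLNorm (f : ℝ → ℂ) : ℝ :=
  ∫ t in Set.Ioo (0 : ℝ) 2, decRearr f t * Real.log (2 * Real.exp 1 / t)

/-- The `L(log L)^α` norm `∫_0^2 f*(t) log^α(2e/t) dt` (for `α = 0` this is the `L¹` norm). -/
def zygNorm (α : ℝ) (f : ℝ → ℂ) : ℝ :=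
  ∫ t in Set.Ioo (0 : ℝ) 2, decRearr f t * Real.log (2 * Real.exp 1 / t) ^ α

/-- Membership in the Zygmund space `L(log L)^α(-1,1)`. -/
def MemZyg (α : ℝ) (f : ℝ → ℂ) : Prop :=
  AEStronglyMeasurable f μI ∧
    IntegrableOn (fun t => decRearr f t * Real.log (2 * Real.exp 1 / t) ^ α)
      (Set.Ioo (0 : ℝ) 2)

/-- Membership in `L(log L)²(-1,1)`: `∫ |f| (log(2+|f|))² < ∞`. -/
def MemLlogL2 (f : ℝ → ℂ) : Prop :=
  AEStronglyMeasurable f μI ∧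
    IntegrableOn (fun x => ‖f x‖ * Real.log (2 + ‖f x‖) ^ 2) (Set.Ioo (-1 : ℝ) 1)

/-- The constant `c(β,γ) = max{1/(1-β), 1/(1-γ), 1/(β+γ-1)}`. -/
def cBG (β γ : ℝ) : ℝ := max (max (1 / (1 - β)) (1 / (1 - γ))) (1 / (β + γ - 1))

/-!
Up to sign and a multiple of `f`, the transform `π T f` is the boundary value on the real line of
the Cauchy transform `F` of `f`, so it suffices to bound `F` on the lines `im z = δ` uniformly in
`δ`. The boundary values exist because for `f ≥ 0` the values of `F` lie in the lower half plane:
then `(F - i)⁻¹` is bounded and Fatou's theorem applies.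

The space `L(log L)^α` is in duality with the functions whose `L^{2k}` norms are `O(k ^ α)`. If `H`
is the Cauchy transform of `h`, shifting the line of integration to `i∞` gives `∫ H ^ (2k) = 0`,
which controls `H` by its imaginary part, the Poisson integral of a real `h`, and yields
`‖H‖_{2k} = O(k) ‖h‖_{2k}`. Passing from `h` to `H` thus turns the growth `k ^ β` into
`k ^ (1 + β)`: dually, `f ↦ F` costs exactly one logarithm.
-/

open Bornology
open Complex (I)
open scoped Topology ENNReal NNReal ComplexConjugate

/-! ### Contour shift on a half plane -/

section Contour

variable {G : ℂ → ℂ} {b : ℝ}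

lemma continuous_horizontal_line (hG : ContinuousOn G {z | b ≤ z.im}) :
    Continuous fun x : ℝ => G (x + b * I) :=
  hG.comp_continuous (by fun_prop) fun x => by simp

lemma tendsto_horizontal_line_cobounded (b : ℝ) :
    Tendsto (fun x : ℝ => (x : ℂ) + b * I) (cocompact ℝ) (cobounded ℂ ⊓ 𝓟 {z | b ≤ z.im}) := by
  refine tendsto_inf.2 ⟨?_, tendsto_principal.2 (Eventually.of_forall fun x => by simp)⟩
  refine tendsto_norm_atTop_iff_cobounded.1
    (tendsto_atTop_mono (fun x => ?_) (tendsto_norm_cocompact_atTop (E := ℝ)))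
  simpa using Complex.abs_re_le_norm ((x : ℂ) + b * I)

lemma integrable_horizontal_line (hG : ContinuousOn G {z | b ≤ z.im})
    (hdecay : G =O[cobounded ℂ ⊓ 𝓟 {z | b ≤ z.im}] fun z => (‖z‖ ^ 2)⁻¹) :
    Integrable fun x : ℝ => G (x + b * I) := by
  have hinv : (fun x : ℝ => (‖(x : ℂ) + b * I‖ ^ 2)⁻¹) =O[cocompact ℝ]
      fun x => (1 + x ^ 2)⁻¹ := by
    refine Asymptotics.IsBigO.of_bound 2 ?_
    filter_upwards [(tendsto_norm_cocompact_atTop (E := ℝ)).eventually_ge_atTop 1] with x hx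
    have hx2 : 1 ≤ x ^ 2 := by rw [← sq_abs]; exact one_le_pow₀ hx
    have hnorm : x ^ 2 ≤ ‖(x : ℂ) + b * I‖ ^ 2 := by
      rw [← sq_abs x]
      gcongr
      simpa using Complex.abs_re_le_norm ((x : ℂ) + b * I)
    rw [Real.norm_of_nonneg (by positivity), Real.norm_of_nonneg (by positivity),
      ← div_eq_mul_inv, inv_eq_one_div, div_le_div_iff₀ (by linarith) (by positivity)]
    linarith
  exact (continuous_horizontal_line hG).locallyIntegrable.integrable_of_isBigO_cocompact
    ((hdecay.comp_tendsto (tendsto_horizontal_line_cobounded b)).trans hinv)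
    (integrable_inv_one_add_sq.integrableAtFilter _)

lemma integral_horizontal_segment_eq (hG : DifferentiableOn ℂ G {z | b ≤ z.im}) {r : ℝ}
    (hbr : b ≤ r) :
    (∫ x in (-r)..r, G (x + b * I)) =
      (∫ x in (-r)..r, G (x + r * I)) - I * (∫ y in b..r, G (r + y * I)) +
        I * (∫ y in b..r, G ((-r : ℝ) + y * I)) := by
  have hrect := Complex.integral_boundary_rect_eq_zero_of_differentiableOn G
    ((-r : ℝ) + b * I) (r + r * I) (hG.mono fun z hz => by
      have := (Complex.mem_reProdIm.1 hz).2
      simp only [Complex.add_im, Complex.ofReal_im, Complex.mul_im, Complex.ofReal_re,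
        Complex.I_im, Complex.I_re, mul_one, mul_zero, add_zero, zero_add, uIcc_of_le hbr] at this
      exact this.1)
  simp only [Complex.add_im, Complex.add_re, Complex.ofReal_im, Complex.mul_im, Complex.mul_re,
    Complex.ofReal_re, Complex.I_im, Complex.I_re, mul_one, mul_zero, add_zero, zero_add,
    sub_zero, smul_eq_mul] at hrect
  linear_combination hrect

lemma norm_integral_horizontal_segment_le (hG : DifferentiableOn ℂ G {z | b ≤ z.im}) {r M : ℝ}
    (hbr : |b| ≤ r) (hM : ∀ z : ℂ, b ≤ z.im → r ≤ ‖z‖ → ‖G z‖ ≤ M) :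
    ‖∫ x in (-r)..r, G (x + b * I)‖ ≤ 6 * (M * r) := by
  obtain ⟨hrb, hbr'⟩ := abs_le.1 hbr
  have hM0 : 0 ≤ M := (norm_nonneg _).trans (hM (r * I) (by simpa using hbr') (by
    simpa using le_abs_self r))
  have htop : ‖∫ x in (-r)..r, G (x + r * I)‖ ≤ M * |r - -r| :=
    intervalIntegral.norm_integral_le_of_norm_le_const fun x _ => hM _ (by simpa using hbr')
      ((le_abs_self r).trans (by simpa using Complex.abs_im_le_norm ((x : ℂ) + r * I)))
  have hside : ∀ a : ℝ, |a| = r → ‖∫ y in b..r, G (a + y * I)‖ ≤ M * |r - b| := by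
    intro a ha
    refine intervalIntegral.norm_integral_le_of_norm_le_const fun y hy => hM _ ?_ ?_
    · rw [uIoc_of_le hbr'] at hy
      simpa using hy.1.le
    · simpa [ha] using Complex.abs_re_le_norm ((a : ℂ) + y * I)
  have hright := hside r (abs_of_nonneg (by linarith))
  have hleft := hside (-r) (by rw [abs_neg, abs_of_nonneg (by linarith)])
  have htop' : |r - -r| = 2 * r := by rw [abs_of_nonneg] <;> linarith
  have hside' : M * |r - b| ≤ M * (2 * r) := by
    gcongr
    exact abs_le.2 ⟨by linarith, by linarith⟩
  rw [htop'] at htop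
  calc _ ≤ ‖∫ x in (-r)..r, G (x + r * I)‖ + ‖∫ y in b..r, G (r + y * I)‖ +
        ‖∫ y in b..r, G ((-r : ℝ) + y * I)‖ := by
        rw [integral_horizontal_segment_eq hG hbr']
        refine (norm_add_le _ _).trans (add_le_add ((norm_sub_le _ _).trans ?_) ?_) <;> simp
    _ ≤ _ := by linarith

theorem integral_horizontal_line_eq_zero (hG : DifferentiableOn ℂ G {z | b ≤ z.im})
    (hdecay : G =O[cobounded ℂ ⊓ 𝓟 {z | b ≤ z.im}] fun z => (‖z‖ ^ 2)⁻¹) :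
    ∫ x : ℝ, G (x + b * I) = 0 := by
  obtain ⟨C, hC0, hC⟩ := hdecay.exists_nonneg
  obtain ⟨R, -, hR⟩ := (hasBasis_cobounded_norm.inf_principal _).eventually_iff.1 hC.bound
  refine tendsto_nhds_unique (intervalIntegral_tendsto_integral
    (integrable_horizontal_line hG.continuousOn hdecay) tendsto_neg_atTop_atBot tendsto_id) ?_
  refine squeeze_zero_norm' ?_ (tendsto_id.const_div_atTop (6 * C))
  filter_upwards [eventually_ge_atTop R, eventually_ge_atTop |b|, eventually_gt_atTop 0]
    with r hRr hbr hr
  refine (norm_integral_horizontal_segment_le hG (M := C / r ^ 2) hbr fun z hz hrz => ?_).trans ?_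
  · refine (hR ⟨hRr.trans hrz, hz⟩).trans ?_
    rw [Real.norm_of_nonneg (by positivity), ← div_eq_mul_inv]
    gcongr
  · exact le_of_eq (by simp only [id]; field_simp)

end Contour

/-! ### The Cauchy transform -/

/-- The Cauchy transform `z ↦ ∫ h(y) / (z - y) dy` of a density `h` on the real line, with the
sign convention for which `h ≥ 0` gives values in the closed lower half plane when `0 < im z`. -/
def cauchyTransform (h : ℝ → ℂ) (z : ℂ) : ℂ := ∫ y, h y / (z - y)

section CauchyTransform

variable {h : ℝ → ℂ} {z : ℂ}

lemma abs_im_le_norm_sub_ofReal (z : ℂ) (y : ℝ) : |z.im| ≤ ‖z - y‖ := by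
  simpa using Complex.abs_im_le_norm (z - y)

lemma sub_ofReal_ne_zero (hz : z.im ≠ 0) (y : ℝ) : z - y ≠ 0 :=
  norm_pos_iff.1 ((abs_pos.2 hz).trans_le (abs_im_le_norm_sub_ofReal z y))

lemma integrable_div_sub_ofReal (hi : Integrable h) (hz : z.im ≠ 0) :
    Integrable fun y : ℝ => h y / (z - y) := by
  simp only [div_eq_mul_inv]
  refine hi.mul_bdd (c := |z.im|⁻¹) (by fun_prop) (Eventually.of_forall fun y => ?_)
  rw [norm_inv]
  exact inv_anti₀ (abs_pos.2 hz) (abs_im_le_norm_sub_ofReal z y)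

lemma cauchyTransform_add {g : ℝ → ℂ} (hh : Integrable h) (hg : Integrable g) (hz : z.im ≠ 0) :
    cauchyTransform (h + g) z = cauchyTransform h z + cauchyTransform g z := by
  simp only [cauchyTransform, Pi.add_apply, add_div]
  exact integral_add (integrable_div_sub_ofReal hh hz) (integrable_div_sub_ofReal hg hz)

lemma cauchyTransform_const_mul (c : ℂ) (h : ℝ → ℂ) (z : ℂ) :
    cauchyTransform (fun y => c * h y) z = c * cauchyTransform h z := by
  simp only [cauchyTransform, mul_div_assoc]
  exact integral_const_mul c _

lemma differentiableAt_cauchyTransform (hi : Integrable h) (hz : z.im ≠ 0) :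
    DifferentiableAt ℂ (cauchyTransform h) z := by
  have hz0 : 0 < |z.im| := abs_pos.2 hz
  have hnhds : {w : ℂ | |z.im| / 2 < |w.im|} ∈ 𝓝 z :=
    (isOpen_lt continuous_const Complex.continuous_im.abs).mem_nhds (half_lt_self hz0)
  have hne {w : ℂ} (hw : |z.im| / 2 < |w.im|) : w.im ≠ 0 :=
    abs_pos.1 ((half_pos hz0).trans hw)
  refine (hasDerivAt_integral_of_dominated_loc_of_deriv_le
    (F' := fun w y => h y * (-1 / (w - y) ^ 2)) (bound := fun y => ‖h y‖ * ((|z.im| / 2) ^ 2)⁻¹)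
    hnhds (Eventually.of_forall fun w => ?_) (integrable_div_sub_ofReal hi hz) ?_
    (Eventually.of_forall fun y w hw => ?_) (hi.norm.mul_const _)
    (Eventually.of_forall fun y w hw => ?_)).2.differentiableAt
  · simp only [div_eq_mul_inv]
    exact hi.1.mul (by fun_prop)
  · exact hi.1.mul (by fun_prop : Measurable fun y : ℝ => -1 / (z - y) ^ 2).aestronglyMeasurable
  · rw [norm_mul, norm_div, norm_neg, norm_one, norm_pow, one_div]
    gcongr
    exact (le_of_lt hw).trans (abs_im_le_norm_sub_ofReal w y)
  · simpa only [div_eq_mul_inv] using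
      (((hasDerivAt_id' w).sub_const (y : ℂ)).fun_inv (sub_ofReal_ne_zero (hne hw) y)).const_mul
        (h y)

lemma differentiableOn_cauchyTransform (hi : Integrable h) {δ : ℝ} (hδ : 0 < δ) :
    DifferentiableOn ℂ (cauchyTransform h) {z | δ ≤ z.im} := fun _ hz =>
  (differentiableAt_cauchyTransform hi (hδ.trans_le hz).ne').differentiableWithinAt

lemma continuous_cauchyTransform_line (hi : Integrable h) {δ : ℝ} (hδ : 0 < δ) :
    Continuous fun x : ℝ => cauchyTransform h (x + δ * I) :=
  continuous_horizontal_line (differentiableOn_cauchyTransform hi hδ).continuousOn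

lemma norm_cauchyTransform_le (hi : Integrable h) {c : ℝ} (hc : 0 < c)
    (hz : ∀ y : ℝ, h y ≠ 0 → c ≤ ‖z - y‖) : ‖cauchyTransform h z‖ ≤ (∫ y, ‖h y‖) / c := by
  rw [cauchyTransform, div_eq_mul_inv, ← integral_mul_const]
  refine norm_integral_le_of_norm_le (hi.norm.mul_const _) (Eventually.of_forall fun y => ?_)
  rw [norm_div, div_eq_mul_inv]
  obtain hy | hy := eq_or_ne (h y) 0
  · simp [hy]
  · gcongr
    exact hz y hy

lemma norm_cauchyTransform_line_le (hi : Integrable h) {δ : ℝ} (hδ : 0 < δ) (x : ℝ) :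
    ‖cauchyTransform h (x + δ * I)‖ ≤ (∫ y, ‖h y‖) / δ :=
  norm_cauchyTransform_le hi hδ fun y _ => by
    simpa [abs_of_pos hδ] using abs_im_le_norm_sub_ofReal (x + δ * I) y

lemma cauchyTransform_isBigO_norm_inv (hi : Integrable h) (hs : IsBounded (Function.support h)) :
    cauchyTransform h =O[cobounded ℂ] fun z => ‖z‖⁻¹ := by
  obtain ⟨R, hR0, hR⟩ := hs.exists_pos_norm_le
  refine Asymptotics.IsBigO.of_bound (2 * ∫ y, ‖h y‖)
    (hasBasis_cobounded_norm.eventually_iff.2 ⟨2 * R, trivial, fun z hz => ?_⟩)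
  have hz' : 2 * R ≤ ‖z‖ := hz
  refine (norm_cauchyTransform_le hi (c := ‖z‖ / 2) (by linarith) fun y hy => ?_).trans
    (le_of_eq ?_)
  · have := hR y hy
    have := norm_sub_norm_le z (y : ℂ)
    rw [Complex.norm_real] at this
    linarith
  · rw [norm_inv, norm_norm]
    field_simp

lemma cauchyTransform_pow_isBigO (hi : Integrable h) (hs : IsBounded (Function.support h))
    {n : ℕ} (hn : 2 ≤ n) :
    (fun z => cauchyTransform h z ^ n) =O[cobounded ℂ] fun z => (‖z‖ ^ 2)⁻¹ := by
  refine ((cauchyTransform_isBigO_norm_inv hi hs).pow n).trans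
    (Asymptotics.IsBigO.of_norm_eventuallyLE ?_)
  filter_upwards [tendsto_norm_cobounded_atTop.eventually_ge_atTop 1] with z hz
  rw [norm_pow, norm_inv, norm_norm, inv_pow]
  gcongr

lemma integrable_cauchyTransform_line_pow (hi : Integrable h)
    (hs : IsBounded (Function.support h)) {δ : ℝ} (hδ : 0 < δ) {n : ℕ} (hn : 2 ≤ n) :
    Integrable fun x : ℝ => cauchyTransform h (x + δ * I) ^ n :=
  integrable_horizontal_line ((differentiableOn_cauchyTransform hi hδ).pow n).continuousOn
    ((cauchyTransform_pow_isBigO hi hs hn).mono inf_le_left)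

lemma integral_cauchyTransform_line_pow_eq_zero (hi : Integrable h)
    (hs : IsBounded (Function.support h)) {δ : ℝ} (hδ : 0 < δ) {n : ℕ} (hn : 2 ≤ n) :
    ∫ x : ℝ, cauchyTransform h (x + δ * I) ^ n = 0 :=
  integral_horizontal_line_eq_zero ((differentiableOn_cauchyTransform hi hδ).pow n)
    ((cauchyTransform_pow_isBigO hi hs hn).mono inf_le_left)

end CauchyTransform

/-! ### Moments of the Cauchy transform -/

lemma norm_pow_sub_pow_le {𝕜 : Type*} [NormedField 𝕜] {a b : 𝕜} {r : ℝ} (ha : ‖a‖ ≤ r)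
    (hb : ‖b‖ ≤ r) (n : ℕ) : ‖a ^ n - b ^ n‖ ≤ n * r ^ (n - 1) * ‖a - b‖ := by
  have hr : 0 ≤ r := (norm_nonneg a).trans ha
  rw [← (Commute.all a b).geom_sum₂_mul, norm_mul]
  gcongr
  refine (norm_sum_le_of_le _ fun i hi => ?_).trans_eq (b := ∑ _i ∈ Finset.range n, r ^ (n - 1))
    (by simp)
  have hin : i + (n - 1 - i) = n - 1 := by have := Finset.mem_range.1 hi; omega
  rw [norm_mul, norm_pow, norm_pow, ← hin, pow_add, hin]
  gcongr

lemma norm_sq_sub_norm_sq (w : ℂ) : ‖w ^ 2 - (‖w‖ : ℂ) ^ 2‖ = 2 * ‖w‖ * |w.im| := by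
  have hfactor : w ^ 2 - (‖w‖ : ℂ) ^ 2 = w * (w - conj w) := by
    rw [mul_sub, Complex.mul_conj, Complex.normSq_eq_norm_sq]
    push_cast
    ring
  rw [hfactor, norm_mul, Complex.sub_conj]
  simp only [norm_mul, Complex.norm_real, Complex.norm_I, Real.norm_eq_abs, abs_two]
  ring

-- If the imaginary part of `w` is not comparable to its modulus, then `w` is so close to the real
-- axis that `w ^ (2 * k)` is still close to the positive half-line.
lemma norm_pow_two_mul_le (w : ℂ) {k : ℕ} (hk : 1 ≤ k) :
    ‖w‖ ^ (2 * k) ≤ (8 * k) ^ (2 * k) * |w.im| ^ (2 * k) + 2 * (w ^ (2 * k)).re := by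
  have hnorm : 0 ≤ ‖w‖ ^ (2 * k) := by positivity
  by_cases him : ‖w‖ ≤ 4 * k * |w.im|
  · have hpow := pow_le_pow_left₀ (by positivity) (by linarith : 2 * ‖w‖ ≤ 8 * k * |w.im|) (2 * k)
    have hfour : (4 : ℝ) ≤ 2 ^ (2 * k) := by
      calc (4 : ℝ) = 2 ^ (2 * 1) := by norm_num
        _ ≤ _ := by gcongr; norm_num
    have hre : -‖w‖ ^ (2 * k) ≤ (w ^ (2 * k)).re := by
      rw [← norm_pow]
      exact (abs_le.1 (Complex.abs_re_le_norm _)).1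
    rw [mul_pow, mul_pow _ |w.im|] at hpow
    nlinarith
  · push Not at him
    have hsub : ‖(w ^ 2) ^ k - ((‖w‖ : ℂ) ^ 2) ^ k‖ ≤ ‖w‖ ^ (2 * k) / 2 := by
      calc _ ≤ k * (‖w‖ ^ 2) ^ (k - 1) * ‖w ^ 2 - (‖w‖ : ℂ) ^ 2‖ :=
            norm_pow_sub_pow_le (by simp) (by simp) k
        _ = (‖w‖ ^ 2) ^ (k - 1) * (‖w‖ * (4 * k * |w.im|)) / 2 := by
            rw [norm_sq_sub_norm_sq]
            ring
        _ ≤ (‖w‖ ^ 2) ^ (k - 1) * (‖w‖ * ‖w‖) / 2 := by gcongr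
        _ = ‖w‖ ^ (2 * k) / 2 := by rw [← sq, pow_sub_one_mul (by omega), pow_mul]
    rw [← pow_mul, ← pow_mul, ← Complex.ofReal_pow] at hsub
    have hre := (abs_le.1 ((Complex.abs_re_le_norm _).trans hsub)).1
    rw [Complex.sub_re, Complex.ofReal_re] at hre
    have : 0 ≤ (8 * (k : ℝ)) ^ (2 * k) * |w.im| ^ (2 * k) := by positivity
    linarith

lemma lintegral_pow_succ_le {X : Type*} [MeasurableSpace X] (μ : Measure X) {H : X → ℝ≥0∞}
    (hH : AEMeasurable H μ) (n : ℕ) :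
    (∫⁻ a, H a ∂μ) ^ (n + 1) ≤ μ univ ^ n * ∫⁻ a, H a ^ (n + 1) ∂μ := by
  obtain rfl | hn := n.eq_zero_or_pos
  · simp
  have hn' : (0 : ℝ) < n := by exact_mod_cast hn
  have hpq : ((n + 1 : ℕ) : ℝ).HolderConjugate ((n + 1) / n) := by
    rw [Real.holderConjugate_iff]
    exact ⟨by push_cast; linarith, by push_cast; field_simp; ring⟩
  have hHolder := ENNReal.lintegral_mul_le_Lp_mul_Lq μ hpq hH (aemeasurable_const (b := 1))
  simp only [Pi.mul_apply, mul_one, ENNReal.one_rpow, lintegral_const, one_mul,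
    ENNReal.rpow_natCast] at hHolder
  refine (pow_le_pow_left' hHolder _).trans (le_of_eq ?_)
  rw [mul_pow, ← ENNReal.rpow_natCast, ← ENNReal.rpow_natCast, ← ENNReal.rpow_mul,
    ← ENNReal.rpow_mul, one_div_mul_cancel (by positivity), ENNReal.rpow_one, mul_comm]
  have hexp : 1 / (((n : ℝ) + 1) / n) * ((n + 1 : ℕ) : ℝ) = (n : ℕ) := by
    push_cast
    field_simp
  rw [hexp, ENNReal.rpow_natCast]

lemma enorm_add_pow_le {E : Type*} [NormedAddCommGroup E] (a b : E) (n : ℕ) :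
    ‖a + b‖ₑ ^ n ≤ 2 ^ (n - 1) * (‖a‖ₑ ^ n + ‖b‖ₑ ^ n) := by
  refine (pow_le_pow_left' (enorm_add_le a b) n).trans ?_
  simp only [enorm_eq_nnnorm]
  exact_mod_cast add_pow_le (zero_le (a := ‖a‖₊)) (zero_le (a := ‖b‖₊)) n

/-- The Poisson kernel of the upper half plane at height `δ`, normalised to have integral `π`. -/
def halfPlanePoisson (δ s : ℝ) : ℝ := δ / (s ^ 2 + δ ^ 2)

section Poisson

variable {δ : ℝ}

@[fun_prop]
lemma measurable_halfPlanePoisson (δ : ℝ) : Measurable (halfPlanePoisson δ) := by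
  unfold halfPlanePoisson
  fun_prop

lemma halfPlanePoisson_nonneg (hδ : 0 ≤ δ) (s : ℝ) : 0 ≤ halfPlanePoisson δ s := by
  unfold halfPlanePoisson
  positivity

lemma halfPlanePoisson_eq (hδ : 0 < δ) :
    halfPlanePoisson δ = fun s => δ⁻¹ * (1 + (δ⁻¹ * s) ^ 2)⁻¹ := by
  ext s
  rw [halfPlanePoisson]
  field_simp
  ring

lemma integrable_halfPlanePoisson (hδ : 0 < δ) : Integrable (halfPlanePoisson δ) := by
  rw [halfPlanePoisson_eq hδ]
  exact (integrable_inv_one_add_sq.comp_mul_left' (inv_ne_zero hδ.ne')).const_mul _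

lemma integral_halfPlanePoisson (hδ : 0 < δ) : ∫ s, halfPlanePoisson δ s = Real.pi := by
  simp only [halfPlanePoisson_eq hδ]
  rw [integral_const_mul, Measure.integral_comp_mul_left (fun u : ℝ => (1 + u ^ 2)⁻¹),
    integral_univ_inv_one_add_sq, inv_inv, abs_of_pos hδ, smul_eq_mul]
  field_simp

lemma lintegral_halfPlanePoisson (hδ : 0 < δ) :
    ∫⁻ s, ENNReal.ofReal (halfPlanePoisson δ s) = ENNReal.ofReal Real.pi := by
  rw [← ofReal_integral_eq_lintegral_ofReal (integrable_halfPlanePoisson hδ)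
    (Eventually.of_forall (halfPlanePoisson_nonneg hδ.le)), integral_halfPlanePoisson hδ]

lemma inv_sub_ofReal_im (δ x y : ℝ) :
    ((x + δ * I - y : ℂ)⁻¹).im = -halfPlanePoisson δ (x - y) := by
  rw [Complex.inv_im, Complex.normSq_apply, halfPlanePoisson]
  simp only [Complex.sub_im, Complex.add_im, Complex.ofReal_im, Complex.mul_im, Complex.ofReal_re,
    Complex.I_im, Complex.I_re, Complex.sub_re, Complex.add_re, Complex.mul_re]
  ring

end Poisson

section Moments

variable {u : ℝ → ℝ} {h : ℝ → ℂ} {δ : ℝ}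

lemma cauchyTransform_im (hu : Integrable u) (hδ : 0 < δ) (x : ℝ) :
    (cauchyTransform (fun y => u y) (x + δ * I)).im = -∫ y, u y * halfPlanePoisson δ (x - y) := by
  have hint := integral_im (integrable_div_sub_ofReal (z := x + δ * I) hu.ofReal
    (by simpa using hδ.ne'))
  simp only [RCLike.im_to_complex] at hint
  rw [cauchyTransform, ← integral_neg]
  refine hint.symm.trans (integral_congr_ae (Eventually.of_forall fun y => ?_))
  change ((u y : ℂ) / (x + δ * I - y)).im = -(u y * halfPlanePoisson δ (x - y))
  rw [div_eq_mul_inv, Complex.im_ofReal_mul, inv_sub_ofReal_im, mul_neg]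

lemma lintegral_enorm_cauchyTransform_pow_le_im (hu : Integrable u)
    (hs : IsBounded (Function.support u)) (hδ : 0 < δ) {k : ℕ} (hk : 1 ≤ k) :
    ∫⁻ x : ℝ, ‖cauchyTransform (fun y => u y) (x + δ * I)‖ₑ ^ (2 * k) ≤
      ENNReal.ofReal (8 * k) ^ (2 * k) *
        ∫⁻ x : ℝ, ‖(cauchyTransform (fun y => u y) (x + δ * I)).im‖ₑ ^ (2 * k) := by
  set F : ℝ → ℂ := fun x => cauchyTransform (fun y => u y) (x + δ * I)
  have hs' : IsBounded (Function.support fun y => (u y : ℂ)) := by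
    simpa [Function.support] using hs
  have hpow : Integrable fun x => F x ^ (2 * k) :=
    integrable_cauchyTransform_line_pow hu.ofReal hs' hδ (by omega)
  have hzero : ∫ x, F x ^ (2 * k) = 0 :=
    integral_cauchyTransform_line_pow_eq_zero hu.ofReal hs' hδ (by omega)
  have hre : ∫ x, (F x ^ (2 * k)).re = 0 := (integral_re hpow).trans (by rw [hzero, map_zero])
  have hnorm : Integrable fun x => ‖F x‖ ^ (2 * k) := by simpa only [norm_pow] using hpow.norm
  have hF : Continuous F := continuous_cauchyTransform_line hu.ofReal hδ
  have him : Integrable fun x => |(F x).im| ^ (2 * k) := by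
    refine hnorm.mono' ((Complex.continuous_im.comp hF).abs.pow _).aestronglyMeasurable
      (Eventually.of_forall fun x => ?_)
    rw [Real.norm_eq_abs, abs_pow, abs_abs]
    gcongr
    exact Complex.abs_im_le_norm _
  have hle : ∫ x, ‖F x‖ ^ (2 * k) ≤ (8 * k) ^ (2 * k) * ∫ x, |(F x).im| ^ (2 * k) := by
    have hre' : Integrable fun x => 2 * (F x ^ (2 * k)).re := hpow.re.const_mul 2
    calc _ ≤ ∫ x, ((8 * k : ℝ) ^ (2 * k) * |(F x).im| ^ (2 * k) + 2 * (F x ^ (2 * k)).re) :=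
          integral_mono hnorm ((him.const_mul _).add hre') fun x => norm_pow_two_mul_le _ hk
      _ = _ := by
          rw [integral_add (him.const_mul _) hre', integral_const_mul, integral_const_mul, hre,
            mul_zero, add_zero]
  have hle' := ENNReal.ofReal_le_ofReal hle
  rw [ENNReal.ofReal_mul (by positivity),
    ofReal_integral_eq_lintegral_ofReal hnorm (Eventually.of_forall fun x => by positivity),
    ofReal_integral_eq_lintegral_ofReal him (Eventually.of_forall fun x => by positivity),
    ENNReal.ofReal_pow (by positivity)] at hle'
  simpa only [ENNReal.ofReal_pow (norm_nonneg _), ofReal_norm, ENNReal.ofReal_pow (abs_nonneg _),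
    ← Real.enorm_eq_ofReal_abs] using hle'

lemma enorm_poissonIntegral_pow_le (hu : AEMeasurable u) (hδ : 0 < δ) (x : ℝ) (n : ℕ) :
    ‖∫ y, u y * halfPlanePoisson δ (x - y)‖ₑ ^ (n + 1) ≤
      ENNReal.ofReal Real.pi ^ n *
        ∫⁻ y, ‖u y‖ₑ ^ (n + 1) * ENNReal.ofReal (halfPlanePoisson δ (x - y)) := by
  have hP : Measurable fun y => ENNReal.ofReal (halfPlanePoisson δ (x - y)) := by fun_prop
  have hmass : ∫⁻ y, ENNReal.ofReal (halfPlanePoisson δ (x - y)) = ENNReal.ofReal Real.pi :=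
    (lintegral_sub_left_eq_self (fun s => ENNReal.ofReal (halfPlanePoisson δ s)) x).trans
      (lintegral_halfPlanePoisson hδ)
  have hJensen := lintegral_pow_succ_le
    (volume.withDensity fun y => ENNReal.ofReal (halfPlanePoisson δ (x - y)))
    (hu.enorm.mono_ac (withDensity_absolutelyContinuous _ _)) n
  rw [withDensity_apply _ MeasurableSet.univ, Measure.restrict_univ, hmass,
    lintegral_withDensity_eq_lintegral_mul₀ hP.aemeasurable hu.enorm,
    lintegral_withDensity_eq_lintegral_mul₀ hP.aemeasurable (hu.enorm.pow_const _)] at hJensen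
  simp only [Pi.mul_apply, mul_comm (ENNReal.ofReal (halfPlanePoisson _ _))] at hJensen
  refine le_trans (pow_le_pow_left' ((enorm_integral_le_lintegral_enorm _).trans_eq ?_) _) hJensen
  simp only [enorm_mul, Real.enorm_eq_ofReal (halfPlanePoisson_nonneg hδ.le _)]

lemma lintegral_enorm_poissonIntegral_pow_le (hu : AEMeasurable u) (hδ : 0 < δ) (n : ℕ) :
    ∫⁻ x, ‖∫ y, u y * halfPlanePoisson δ (x - y)‖ₑ ^ (n + 1) ≤
      ENNReal.ofReal Real.pi ^ (n + 1) * ∫⁻ y, ‖u y‖ₑ ^ (n + 1) := by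
  have hmass : ∀ y, ∫⁻ x, ENNReal.ofReal (halfPlanePoisson δ (x - y)) = ENNReal.ofReal Real.pi :=
    fun y => (lintegral_sub_right_eq_self
      (fun s => ENNReal.ofReal (halfPlanePoisson δ s)) y).trans (lintegral_halfPlanePoisson hδ)
  calc _ ≤ ∫⁻ x, ENNReal.ofReal Real.pi ^ n *
        ∫⁻ y, ‖u y‖ₑ ^ (n + 1) * ENNReal.ofReal (halfPlanePoisson δ (x - y)) :=
        lintegral_mono fun x => enorm_poissonIntegral_pow_le hu hδ x n
    _ = ENNReal.ofReal Real.pi ^ n *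
        ∫⁻ x, ∫⁻ y, ‖u y‖ₑ ^ (n + 1) * ENNReal.ofReal (halfPlanePoisson δ (x - y)) :=
        lintegral_const_mul' _ _ (by simp)
    _ = ENNReal.ofReal Real.pi ^ n *
        ∫⁻ y, ∫⁻ x, ‖u y‖ₑ ^ (n + 1) * ENNReal.ofReal (halfPlanePoisson δ (x - y)) := by
        rw [lintegral_lintegral_swap]
        exact (hu.enorm.pow_const _).comp_snd.mul (by fun_prop)
    _ = ENNReal.ofReal Real.pi ^ n * ∫⁻ y, ‖u y‖ₑ ^ (n + 1) * ENNReal.ofReal Real.pi := by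
        congr! 3 with y
        rw [lintegral_const_mul _ (by fun_prop), hmass]
    _ = _ := by
        rw [lintegral_mul_const' _ _ (by simp), pow_succ]
        ring

lemma lintegral_enorm_cauchyTransform_ofReal_pow_le (hu : Integrable u)
    (hs : IsBounded (Function.support u)) (hδ : 0 < δ) {k : ℕ} (hk : 1 ≤ k) :
    ∫⁻ x : ℝ, ‖cauchyTransform (fun y => u y) (x + δ * I)‖ₑ ^ (2 * k) ≤
      ENNReal.ofReal (8 * k * Real.pi) ^ (2 * k) * ∫⁻ y, ‖u y‖ₑ ^ (2 * k) := by
  refine (lintegral_enorm_cauchyTransform_pow_le_im hu hs hδ hk).trans ?_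
  rw [ENNReal.ofReal_mul (p := 8 * (k : ℝ)) (by positivity), mul_pow, mul_assoc]
  gcongr
  simp only [cauchyTransform_im hu hδ, enorm_neg]
  have hpoisson := lintegral_enorm_poissonIntegral_pow_le hu.1.aemeasurable hδ (2 * k - 1)
  rwa [show 2 * k - 1 + 1 = 2 * k by omega] at hpoisson

lemma cauchyTransform_eq_re_add_im (hi : Integrable h) {z : ℂ} (hz : z.im ≠ 0) :
    cauchyTransform h z =
      cauchyTransform (fun y => (h y).re) z + I * cauchyTransform (fun y => (h y).im) z := by
  have hre : Integrable fun y => ((h y).re : ℂ) := hi.re.ofReal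
  have him : Integrable fun y => ((h y).im : ℂ) := hi.im.ofReal
  rw [← cauchyTransform_const_mul, ← cauchyTransform_add hre (him.const_mul I) hz]
  congr 1
  ext y
  simp only [Pi.add_apply, mul_comm I, Complex.re_add_im]

theorem lintegral_enorm_cauchyTransform_pow_le (hi : Integrable h)
    (hs : IsBounded (Function.support h)) (hδ : 0 < δ) {k : ℕ} (hk : 1 ≤ k) :
    ∫⁻ x : ℝ, ‖cauchyTransform h (x + δ * I)‖ₑ ^ (2 * k) ≤
      ENNReal.ofReal (16 * k * Real.pi) ^ (2 * k) * ∫⁻ y, ‖h y‖ₑ ^ (2 * k) := by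
  set S := ENNReal.ofReal (8 * k * Real.pi) ^ (2 * k) * ∫⁻ y, ‖h y‖ₑ ^ (2 * k) with hS
  have hpart : ∀ u : ℝ → ℝ, Integrable u → (∀ y, ‖u y‖ ≤ ‖h y‖) →
      ∫⁻ x : ℝ, ‖cauchyTransform (fun y => u y) (x + δ * I)‖ₑ ^ (2 * k) ≤ S := by
    intro u hu hle
    have hsu : IsBounded (Function.support u) := hs.subset fun y hy h0 =>
      hy (norm_le_zero_iff.1 ((hle y).trans_eq (by rw [h0, norm_zero])))
    refine (lintegral_enorm_cauchyTransform_ofReal_pow_le hu hsu hδ hk).trans ?_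
    rw [hS]
    gcongr with y
    exact enorm_le_iff_norm_le.2 (hle y)
  set Fre : ℝ → ℂ := fun x => cauchyTransform (fun y => (h y).re) (x + δ * I)
  set Fim : ℝ → ℂ := fun x => cauchyTransform (fun y => (h y).im) (x + δ * I)
  have hFre : Measurable Fre := (continuous_cauchyTransform_line hi.re.ofReal hδ).measurable
  have hFim : Measurable Fim := (continuous_cauchyTransform_line hi.im.ofReal hδ).measurable
  have hpt : ∀ x : ℝ, ‖cauchyTransform h (x + δ * I)‖ₑ ^ (2 * k) ≤
      2 ^ (2 * k - 1) * (‖Fre x‖ₑ ^ (2 * k) + ‖Fim x‖ₑ ^ (2 * k)) := fun x => by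
    rw [cauchyTransform_eq_re_add_im hi (by simpa using hδ.ne')]
    refine (enorm_add_pow_le _ _ _).trans_eq ?_
    rw [enorm_mul, ← ofReal_norm I, Complex.norm_I, ENNReal.ofReal_one, one_mul]
  calc _ ≤ ∫⁻ x, 2 ^ (2 * k - 1) * (‖Fre x‖ₑ ^ (2 * k) + ‖Fim x‖ₑ ^ (2 * k)) := lintegral_mono hpt
    _ = 2 ^ (2 * k - 1) * ((∫⁻ x, ‖Fre x‖ₑ ^ (2 * k)) + ∫⁻ x, ‖Fim x‖ₑ ^ (2 * k)) := by
        rw [lintegral_const_mul _ (by fun_prop), lintegral_add_left (by fun_prop)]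
    _ ≤ 2 ^ (2 * k - 1) * (S + S) := by
        gcongr
        · exact hpart _ hi.re fun y => Complex.abs_re_le_norm (h y)
        · exact hpart _ hi.im fun y => Complex.abs_im_le_norm (h y)
    _ = _ := by
        rw [← two_mul, ← mul_assoc, pow_sub_one_mul (by omega), ← mul_assoc, ← mul_pow,
          ← ENNReal.ofReal_ofNat 2, ← ENNReal.ofReal_mul (by norm_num)]
        ring_nf

end Moments

/-! ### Rearrangements and the Zygmund norm -/

/-- The logarithmic weight `log (2e / s)` of the Zygmund norms, at least `1` on `(0, 2]`. -/
def logWeight (s : ℝ) : ℝ := Real.log (2 * Real.exp 1 / s)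

section LogWeight

variable {s t α : ℝ}

@[fun_prop]
lemma measurable_logWeight : Measurable logWeight := by
  unfold logWeight
  fun_prop

lemma one_le_logWeight (hs : 0 < s) (hs2 : s ≤ 2) : 1 ≤ logWeight s := by
  rw [logWeight, Real.le_log_iff_exp_le (by positivity), le_div_iff₀ hs]
  nlinarith [Real.exp_pos 1]

lemma logWeight_two : logWeight 2 = 1 := by
  rw [logWeight, mul_div_cancel_left₀ _ two_ne_zero, Real.log_exp]

lemma logWeight_rpow_nonneg (hs : 0 < s) (hs2 : s ≤ 2) : 0 ≤ logWeight s ^ α :=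
  Real.rpow_nonneg (zero_le_one.trans (one_le_logWeight hs hs2)) α

lemma logWeight_eq_add_log_div (hs : 0 < s) (ht : 0 < t) :
    logWeight t = logWeight s + Real.log (s / t) := by
  rw [logWeight, logWeight, ← Real.log_mul (by positivity) (by positivity)]
  congr 1
  field_simp

lemma logWeight_le_logWeight (hs : 0 < s) (hst : s ≤ t) : logWeight t ≤ logWeight s := by
  have ht := hs.trans_le hst
  exact Real.log_le_log (by positivity) (by gcongr)

lemma logWeight_rpow_le (hα : 0 ≤ α) (hs : 0 < s) (hst : s ≤ t) (ht : t ≤ 2) :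
    logWeight t ^ α ≤ logWeight s ^ α :=
  Real.rpow_le_rpow (zero_le_one.trans (one_le_logWeight (hs.trans_le hst) ht))
    (logWeight_le_logWeight hs hst) hα

lemma mul_logWeight_rpow_le_lintegral (hα : 0 ≤ α) (hs : 0 ≤ s) (hs2 : s ≤ 2) :
    ENNReal.ofReal (s * logWeight s ^ α) ≤
      ∫⁻ t in Ioo 0 s, ENNReal.ofReal (logWeight t ^ α) := by
  calc _ = ∫⁻ _t in Ioo 0 s, ENNReal.ofReal (logWeight s ^ α) := by
        rw [setLIntegral_const, Real.volume_Ioo, sub_zero, ENNReal.ofReal_mul hs, mul_comm]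
    _ ≤ _ := setLIntegral_mono' measurableSet_Ioo fun t ht =>
        ENNReal.ofReal_le_ofReal (logWeight_rpow_le hα ht.1 ht.2.le hs2)

-- The power `(s / t) ^ (1 / (2α + 2))` dominates `log (s / t)`, and its `α`-th power is still
-- integrable at `t = 0`.
lemma logWeight_rpow_le_mul_sqrt (hα : 0 ≤ α) (ht : 0 < t) (hts : t ≤ s) (hs2 : s ≤ 2) :
    logWeight t ^ α ≤ (1 + 2 * (α + 1)) ^ α * logWeight s ^ α * (s / t) ^ (1 / 2 : ℝ) := by
  set m : ℝ := 2 * (α + 1) with hm_def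
  have hm : 0 < m := by positivity
  have hs := ht.trans_le hts
  have hL := one_le_logWeight hs hs2
  have hratio : 1 ≤ s / t := (one_le_div ht).2 hts
  have hlog : Real.log (s / t) ≤ m * (s / t) ^ (1 / m) := by
    refine (Real.log_le_rpow_div (ε := 1 / m) (by positivity) (by positivity)).trans_eq ?_
    field_simp
  have hone : 1 ≤ (s / t) ^ (1 / m) := Real.one_le_rpow hratio (by positivity)
  have hlin : logWeight t ≤ (1 + m) * logWeight s * (s / t) ^ (1 / m) := by
    rw [logWeight_eq_add_log_div hs ht]
    nlinarith [mul_nonneg hm.le (zero_le_one.trans hone)]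
  calc logWeight t ^ α ≤ ((1 + m) * logWeight s * (s / t) ^ (1 / m)) ^ α :=
        Real.rpow_le_rpow (zero_le_one.trans (one_le_logWeight ht (hts.trans hs2))) hlin hα
    _ = (1 + m) ^ α * logWeight s ^ α * (s / t) ^ (1 / m * α) := by
        rw [Real.mul_rpow (by positivity) (by positivity),
          Real.mul_rpow (by positivity) (by positivity), ← Real.rpow_mul (by positivity)]
    _ ≤ (1 + m) ^ α * logWeight s ^ α * (s / t) ^ (1 / 2 : ℝ) := by
        have hexp : 1 / m * α ≤ 1 / 2 := by
          rw [one_div, ← div_eq_inv_mul, div_le_iff₀ hm, hm_def]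
          linarith
        gcongr

lemma lintegral_div_rpow_half (hs : 0 < s) :
    ∫⁻ t in Ioo 0 s, ENNReal.ofReal ((s / t) ^ (1 / 2 : ℝ)) = ENNReal.ofReal (2 * s) := by
  have hcongr : ∀ t ∈ Ioo 0 s, (s / t) ^ (1 / 2 : ℝ) = s ^ (1 / 2 : ℝ) * t ^ (-1 / 2 : ℝ) := by
    intro t ht
    rw [Real.div_rpow hs.le ht.1.le, neg_div, Real.rpow_neg ht.1.le, div_eq_mul_inv]
  have hint : IntegrableOn (fun t => (s / t) ^ (1 / 2 : ℝ)) (Ioo 0 s) := by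
    refine IntegrableOn.congr_fun ?_ (fun t ht => (hcongr t ht).symm) measurableSet_Ioo
    exact ((intervalIntegrable_iff_integrableOn_Ioo_of_le hs.le).1
      (intervalIntegral.intervalIntegrable_rpow' (by norm_num))).const_mul _
  rw [← ofReal_integral_eq_lintegral_ofReal hint
    (ae_restrict_of_forall_mem measurableSet_Ioo fun t ht =>
      Real.rpow_nonneg (div_nonneg hs.le ht.1.le) _),
    setIntegral_congr_fun measurableSet_Ioo hcongr, integral_const_mul,
    ← integral_Ioc_eq_integral_Ioo, ← intervalIntegral.integral_of_le hs.le,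
    integral_rpow (Or.inl (by norm_num))]
  have hsq : s ^ (1 / 2 : ℝ) * s ^ (1 / 2 : ℝ) = s := by
    rw [← Real.rpow_add hs]
    norm_num
  congr 1
  norm_num
  linear_combination 2 * hsq

lemma lintegral_logWeight_rpow_le (hα : 0 ≤ α) (hs : 0 ≤ s) (hs2 : s ≤ 2) :
    ∫⁻ t in Ioo 0 s, ENNReal.ofReal (logWeight t ^ α) ≤
      ENNReal.ofReal (2 * (1 + 2 * (α + 1)) ^ α * (s * logWeight s ^ α)) := by
  obtain rfl | hs := hs.eq_or_lt
  · simp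
  have hL := logWeight_rpow_nonneg (α := α) hs hs2
  calc _ ≤ ∫⁻ t in Ioo 0 s, ENNReal.ofReal ((1 + 2 * (α + 1)) ^ α * logWeight s ^ α) *
          ENNReal.ofReal ((s / t) ^ (1 / 2 : ℝ)) :=
        setLIntegral_mono' measurableSet_Ioo fun t ht => by
          rw [← ENNReal.ofReal_mul (by positivity)]
          exact ENNReal.ofReal_le_ofReal (logWeight_rpow_le_mul_sqrt hα ht.1 ht.2.le hs2)
    _ = _ := by
        rw [lintegral_const_mul' _ _ (by simp), lintegral_div_rpow_half hs,
          ← ENNReal.ofReal_mul (by positivity)]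
        congr 1
        ring

end LogWeight

instance : IsFiniteMeasure μI := by
  unfold μI
  infer_instance

lemma μI_univ : μI univ = 2 := by
  rw [μI, Measure.restrict_apply_univ, Real.volume_Ioo]
  norm_num

section Rearrangement

variable {f g : ℝ → ℂ} {t α : ℝ}

lemma ofReal_distFun (f : ℝ → ℂ) (l : ℝ) : ENNReal.ofReal (distFun f l) = μI {x | l < ‖f x‖} := by
  have hset : {x : ℝ | x ∈ Ioo (-1 : ℝ) 1 ∧ l < ‖f x‖} = {x | l < ‖f x‖} ∩ Ioo (-1) 1 := by
    ext x
    exact and_comm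
  rw [distFun, hset, ← Measure.restrict_apply' measurableSet_Ioo, ← μI,
    ENNReal.ofReal_toReal (by finiteness)]

lemma distFun_nonneg (f : ℝ → ℂ) (l : ℝ) : 0 ≤ distFun f l := ENNReal.toReal_nonneg

lemma distFun_le_two (f : ℝ → ℂ) (l : ℝ) : distFun f l ≤ 2 := by
  rw [← ENNReal.ofReal_le_ofReal_iff (by norm_num), ofReal_distFun, ENNReal.ofReal_ofNat, ← μI_univ]
  exact measure_mono (subset_univ _)

lemma distFun_le_distFun (hfg : ∀ᵐ x ∂μI, ‖f x‖ ≤ ‖g x‖) (l : ℝ) : distFun f l ≤ distFun g l := by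
  rw [← ENNReal.ofReal_le_ofReal_iff (distFun_nonneg g l), ofReal_distFun, ofReal_distFun]
  exact measure_mono_ae (hfg.mono fun x hx hl => lt_of_lt_of_le hl hx)

lemma antitone_distFun (f : ℝ → ℂ) : Antitone (distFun f) := by
  intro l m hlm
  rw [← ENNReal.ofReal_le_ofReal_iff (distFun_nonneg f l), ofReal_distFun, ofReal_distFun]
  exact measure_mono fun x hx => lt_of_le_of_lt hlm hx

lemma exists_distFun_le (hf : AEStronglyMeasurable f μI) (ht : 0 < t) :
    ∃ l : ℝ, 0 ≤ l ∧ distFun f l ≤ t := by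
  have hlim := tendsto_measure_iInter_atTop (μ := μI) (s := fun n : ℕ => {x | (n : ℝ) < ‖f x‖})
    (fun n => nullMeasurableSet_lt aemeasurable_const hf.norm.aemeasurable)
    (fun a b hab x (hx : (b : ℝ) < ‖f x‖) => (Nat.cast_le.2 hab).trans_lt hx) ⟨0, by finiteness⟩
  have hempty : (⋂ n : ℕ, {x | (n : ℝ) < ‖f x‖}) = ∅ := by
    ext x
    simpa using exists_nat_ge ‖f x‖
  rw [hempty, measure_empty] at hlim
  obtain ⟨n, hn⟩ := (hlim.eventually_lt_const (ENNReal.ofReal_pos.2 ht)).exists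
  refine ⟨n, n.cast_nonneg, ?_⟩
  rw [← ENNReal.ofReal_le_ofReal_iff ht.le, ofReal_distFun]
  exact hn.le

lemma decRearr_nonneg (f : ℝ → ℂ) (t : ℝ) : 0 ≤ decRearr f t :=
  Real.sInf_nonneg fun _ hl => hl.1

lemma ofReal_decRearr (hf : AEStronglyMeasurable f μI) (ht : 0 < t) :
    ENNReal.ofReal (decRearr f t) = volume.restrict (Ioi 0) {l | t < distFun f l} := by
  rw [Measure.restrict_apply' measurableSet_Ioi]
  refine le_antisymm ?_ ?_
  · rw [← sub_zero (decRearr f t), ← Real.volume_Ioo]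
    refine measure_mono fun l hl => ⟨?_, hl.1⟩
    by_contra! hle
    exact hl.2.not_ge (csInf_le ⟨0, fun _ hm => hm.1⟩ ⟨hl.1.le, not_lt.1 hle⟩)
  · rw [← sub_zero (decRearr f t), ← Real.volume_Ioc]
    refine measure_mono fun l ⟨hl, hl0⟩ => ⟨hl0, le_csInf (exists_distFun_le hf ht) fun m hm => ?_⟩
    by_contra! hml
    exact (hm.2.trans_lt hl).not_ge (antitone_distFun f hml.le)

/-- The `L(log L)^α` norm as an extended nonnegative number, which is `∞` (rather than the junk
value `0` of a Bochner integral) off the Zygmund space. -/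
def ezygNorm (α : ℝ) (f : ℝ → ℂ) : ℝ≥0∞ :=
  ∫⁻ t in Ioo (0 : ℝ) 2, ENNReal.ofReal (decRearr f t * logWeight t ^ α)

lemma lintegral_mul_measure_setOf {X Y : Type*} [MeasurableSpace X] [MeasurableSpace Y]
    {μ : Measure X} {ν : Measure Y} [SFinite μ] [SFinite ν] {p : X → Y → Prop}
    (hp : MeasurableSet {z : X × Y | p z.1 z.2}) {w : X → ℝ≥0∞} (hw : Measurable w) :
    ∫⁻ x, w x * ν {y | p x y} ∂μ = ∫⁻ y, ∫⁻ x in {x | p x y}, w x ∂μ ∂ν := by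
  have hfst (x : X) : MeasurableSet {y | p x y} := measurable_prodMk_left hp
  have hsnd (y : Y) : MeasurableSet {x | p x y} := measurable_prodMk_right hp
  have hswap := lintegral_lintegral_swap (μ := μ) (ν := ν)
    (f := fun x y => {z : X × Y | p z.1 z.2}.indicator (fun z => w z.1) (x, y))
    ((hw.comp measurable_fst).indicator hp).aemeasurable
  calc _ = ∫⁻ x, ∫⁻ y, {y | p x y}.indicator (fun _ => w x) y ∂ν ∂μ := by
        simp only [lintegral_indicator_const (hfst _)]
    _ = ∫⁻ y, ∫⁻ x, {x | p x y}.indicator w x ∂μ ∂ν := hswap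
    _ = _ := by simp only [lintegral_indicator (hsnd _)]

lemma ezygNorm_eq_lintegral_distFun (hf : AEStronglyMeasurable f μI) (α : ℝ) :
    ezygNorm α f =
      ∫⁻ l in Ioi (0 : ℝ), ∫⁻ t in Ioo 0 (distFun f l), ENNReal.ofReal (logWeight t ^ α) := by
  have hd : Measurable (distFun f) := (antitone_distFun f).measurable
  calc _ = ∫⁻ t in Ioo (0 : ℝ) 2, ENNReal.ofReal (logWeight t ^ α) *
          volume.restrict (Ioi 0) {l | t < distFun f l} :=
        setLIntegral_congr_fun measurableSet_Ioo fun t ht => by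
          rw [ENNReal.ofReal_mul (decRearr_nonneg f t), ofReal_decRearr hf ht.1, mul_comm]
    _ = ∫⁻ l in Ioi (0 : ℝ), ∫⁻ t in Iio (distFun f l), ENNReal.ofReal (logWeight t ^ α)
          ∂volume.restrict (Ioo 0 2) :=
        lintegral_mul_measure_setOf (p := fun t l => t < distFun f l)
          (measurableSet_lt measurable_fst (hd.comp measurable_snd)) (by fun_prop)
    _ = _ := by
        refine lintegral_congr fun l => ?_
        rw [Measure.restrict_restrict measurableSet_Iio, inter_comm, Ioo_inter_Iio,
          min_eq_right (distFun_le_two f l)]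

lemma lintegral_distFun_mul_le_ezygNorm (hf : AEStronglyMeasurable f μI) (hα : 0 ≤ α) :
    ∫⁻ l in Ioi (0 : ℝ), ENNReal.ofReal (distFun f l * logWeight (distFun f l) ^ α) ≤
      ezygNorm α f := by
  rw [ezygNorm_eq_lintegral_distFun hf]
  exact lintegral_mono fun l =>
    mul_logWeight_rpow_le_lintegral hα (distFun_nonneg f l) (distFun_le_two f l)

lemma ezygNorm_le_lintegral_distFun_mul (hf : AEStronglyMeasurable f μI) (hα : 0 ≤ α) :
    ezygNorm α f ≤ ENNReal.ofReal (2 * (1 + 2 * (α + 1)) ^ α) *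
      ∫⁻ l in Ioi (0 : ℝ), ENNReal.ofReal (distFun f l * logWeight (distFun f l) ^ α) := by
  rw [ezygNorm_eq_lintegral_distFun hf, ← lintegral_const_mul' _ _ ENNReal.ofReal_ne_top]
  refine lintegral_mono fun l => ?_
  simp only [← ENNReal.ofReal_mul (show 0 ≤ 2 * (1 + 2 * (α + 1)) ^ α by positivity)]
  exact lintegral_logWeight_rpow_le hα (distFun_nonneg f l) (distFun_le_two f l)

lemma ezygNorm_mono_ae (hf : AEStronglyMeasurable f μI) (hg : AEStronglyMeasurable g μI)
    (hfg : ∀ᵐ x ∂μI, ‖f x‖ ≤ ‖g x‖) (α : ℝ) : ezygNorm α f ≤ ezygNorm α g := by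
  rw [ezygNorm_eq_lintegral_distFun hf, ezygNorm_eq_lintegral_distFun hg]
  exact lintegral_mono fun l =>
    lintegral_mono_set (Ioo_subset_Ioo_right (distFun_le_distFun hfg l))

lemma ezygNorm_mono_exponent {β : ℝ} (hαβ : α ≤ β) (f : ℝ → ℂ) : ezygNorm α f ≤ ezygNorm β f :=
  setLIntegral_mono' measurableSet_Ioo fun t ht => ENNReal.ofReal_le_ofReal
    (mul_le_mul_of_nonneg_left
      (Real.rpow_le_rpow_of_exponent_le (one_le_logWeight ht.1 ht.2.le) hαβ) (decRearr_nonneg f t))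

end Rearrangement

/-! ### Duality with functions of controlled moment growth -/

/-- The moments of `H` satisfy `‖H‖_{L^{2k}(μ)} ≤ A k ^ α` for all `k ≥ 1`. On a finite measure
space this is a quantitative form of `H ∈ exp L^{1/α}`, the dual of `L(log L)^α`. -/
def HasMomentGrowth {X : Type*} [MeasurableSpace X] (μ : Measure X) (A α : ℝ) (H : X → ℝ≥0∞) :
    Prop :=
  ∀ k : ℕ, 1 ≤ k → ∫⁻ x, H x ^ (2 * k) ∂μ ≤ ENNReal.ofReal (A * k ^ α) ^ (2 * k)

section MomentGrowth

variable {X : Type*} [MeasurableSpace X] {μ : Measure X} {A α s : ℝ} {H K : X → ℝ≥0∞}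

lemma HasMomentGrowth.mono (hH : HasMomentGrowth μ A α H) (hKH : ∀ x, K x ≤ H x) :
    HasMomentGrowth μ A α K := fun k hk =>
  (lintegral_mono fun x => pow_le_pow_left' (hKH x) (2 * k)).trans (hH k hk)

lemma one_le_mul_four_pow (hs : 0 < s) {k : ℕ} (hk : logWeight s ≤ k) : 1 ≤ s * 4 ^ k := by
  have hexp : 2 * Real.exp 1 / s ≤ 4 ^ k := by
    calc 2 * Real.exp 1 / s = Real.exp (logWeight s) := by
          rw [logWeight, Real.exp_log (by positivity)]
      _ ≤ Real.exp k := Real.exp_le_exp.2 hk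
      _ = Real.exp 1 ^ k := by rw [← Real.exp_nat_mul, mul_one]
      _ ≤ 4 ^ k := by
          gcongr
          linarith [Real.exp_one_lt_d9]
  rw [div_le_iff₀ hs] at hexp
  linarith [Real.add_one_le_exp 1]

lemma HasMomentGrowth.setLIntegral_le_of_logWeight_le (hH : HasMomentGrowth μ A α H)
    (hHm : AEMeasurable H μ) {E : Set X} (hs : 0 < s) (hE : μ E = ENNReal.ofReal s) {k : ℕ}
    (hk : 1 ≤ k) (hkL : logWeight s ≤ k) :
    ∫⁻ x in E, H x ∂μ ≤ ENNReal.ofReal (2 * s * (A * k ^ α)) := by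
  obtain ⟨n, hn⟩ : ∃ n, 2 * k = n + 1 := ⟨2 * k - 1, by omega⟩
  have hmeasure : s ^ n ≤ (2 * s) ^ (2 * k) := by
    calc s ^ n ≤ s * 4 ^ k * s ^ n := le_mul_of_one_le_left (by positivity)
          (one_le_mul_four_pow hs hkL)
      _ = (2 * s) ^ (2 * k) := by
          rw [mul_pow, pow_mul 2, hn, pow_succ]
          norm_num
          ring
  have hpow : (∫⁻ x in E, H x ∂μ) ^ (2 * k) ≤ ENNReal.ofReal (2 * s * (A * k ^ α)) ^ (2 * k) := by
    calc (∫⁻ x in E, H x ∂μ) ^ (2 * k) ≤ ENNReal.ofReal s ^ n * ∫⁻ x in E, H x ^ (2 * k) ∂μ := by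
          have := lintegral_pow_succ_le (μ.restrict E) hHm.restrict n
          rwa [Measure.restrict_apply_univ, hE, ← hn] at this
      _ ≤ ENNReal.ofReal (2 * s) ^ (2 * k) * ENNReal.ofReal (A * k ^ α) ^ (2 * k) := by
          refine mul_le_mul' ?_ ((setLIntegral_le_lintegral _ _).trans (hH k hk))
          rw [← ENNReal.ofReal_pow hs.le, ← ENNReal.ofReal_pow (by positivity)]
          exact ENNReal.ofReal_le_ofReal hmeasure
      _ = _ := by rw [← mul_pow, ← ENNReal.ofReal_mul (by positivity)]
  exact (ENNReal.pow_le_pow_left_iff (by omega)).1 hpow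

-- Hölder's inequality with the exponent `2k`, where `k` is about `log (2e / μ E)`.
lemma HasMomentGrowth.setLIntegral_le (hH : HasMomentGrowth μ A α H) (hHm : AEMeasurable H μ)
    (hA : 0 ≤ A) (hα : 0 ≤ α) {E : Set X} (hs : 0 ≤ s) (hs2 : s ≤ 2)
    (hE : μ E = ENNReal.ofReal s) :
    ∫⁻ x in E, H x ∂μ ≤ ENNReal.ofReal (2 * 2 ^ α * A * (s * logWeight s ^ α)) := by
  obtain rfl | hs := hs.eq_or_lt
  · rw [setLIntegral_measure_zero _ _ (by simpa using hE)]
    exact zero_le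
  have hL := one_le_logWeight hs hs2
  set k := ⌈logWeight s⌉₊
  have hkL : logWeight s ≤ k := Nat.le_ceil _
  refine (hH.setLIntegral_le_of_logWeight_le hHm hs hE (Nat.one_le_cast.1 (hL.trans hkL))
    hkL).trans (ENNReal.ofReal_le_ofReal ?_)
  have hkα : (k : ℝ) ^ α ≤ 2 ^ α * logWeight s ^ α := by
    rw [← Real.mul_rpow (by norm_num) (by positivity)]
    have := Nat.ceil_lt_add_one (zero_le_one.trans hL)
    exact Real.rpow_le_rpow (by positivity) (by linarith) hα
  calc _ ≤ 2 * s * (A * (2 ^ α * logWeight s ^ α)) := by gcongr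
    _ = _ := by ring

lemma HasMomentGrowth.lintegral_ne_top (hH : HasMomentGrowth μ A α H) (hHm : AEMeasurable H μ)
    [IsFiniteMeasure μ] : ∫⁻ x, H x ∂μ ≠ ∞ := by
  have hbound := lintegral_pow_succ_le μ hHm 1
  have hsq := hH 1 le_rfl
  refine fun htop => (lt_of_le_of_lt (hbound.trans (mul_le_mul_right hsq _)) ?_).ne
    (by rw [htop, ENNReal.top_pow (by norm_num)])
  finiteness

end MomentGrowth

section ZygmundDuality

variable {A α : ℝ} {f : ℝ → ℂ}

lemma lintegral_enorm_mul_eq_lintegral_setLIntegral {X E : Type*} [MeasurableSpace X]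
    [NormedAddCommGroup E] {μ : Measure X} [SFinite μ] {f : X → E} {H : X → ℝ≥0∞}
    (hf : AEStronglyMeasurable f μ) (hH : AEMeasurable H μ) :
    ∫⁻ x, ‖f x‖ₑ * H x ∂μ = ∫⁻ l in Ioi (0 : ℝ), ∫⁻ x in {x | l < ‖f x‖}, H x ∂μ := by
  have hcake := lintegral_eq_lintegral_meas_lt (μ.withDensity H)
    (Eventually.of_forall fun x => norm_nonneg (f x))
    (hf.norm.aemeasurable.mono_ac (withDensity_absolutelyContinuous _ _))
  simp only [ofReal_norm, withDensity_apply'] at hcake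
  rw [lintegral_withDensity_eq_lintegral_mul₀ hH hf.enorm] at hcake
  simpa only [Pi.mul_apply, mul_comm (H _)] using hcake

theorem HasMomentGrowth.lintegral_enorm_mul_le {H : ℝ → ℝ≥0∞} (hH : HasMomentGrowth μI A α H)
    (hHm : AEMeasurable H μI) (hA : 0 ≤ A) (hα : 0 ≤ α) (hf : AEStronglyMeasurable f μI) :
    ∫⁻ x, ‖f x‖ₑ * H x ∂μI ≤ ENNReal.ofReal (2 * 2 ^ α * A) * ezygNorm α f := by
  calc _ = ∫⁻ l in Ioi (0 : ℝ), ∫⁻ x in {x | l < ‖f x‖}, H x ∂μI :=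
        lintegral_enorm_mul_eq_lintegral_setLIntegral hf hHm
    _ ≤ ∫⁻ l in Ioi (0 : ℝ), ENNReal.ofReal (2 * 2 ^ α * A) *
          ENNReal.ofReal (distFun f l * logWeight (distFun f l) ^ α) :=
        lintegral_mono fun l => (hH.setLIntegral_le hHm hA hα (distFun_nonneg f l)
          (distFun_le_two f l) (ofReal_distFun f l).symm).trans_eq
            (ENNReal.ofReal_mul (by positivity))
    _ ≤ _ := by
        rw [lintegral_const_mul' _ _ ENNReal.ofReal_ne_top]
        gcongr
        exact lintegral_distFun_mul_le_ezygNorm hf hα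

lemma hasMomentGrowth_one (hα : 0 ≤ α) : HasMomentGrowth μI 2 α 1 := by
  intro k hk
  have hkα : (1 : ℝ) ≤ k ^ α := Real.one_le_rpow (Nat.one_le_cast.2 hk) hα
  have htwo : (2 : ℝ≥0∞) ≤ ENNReal.ofReal (2 * k ^ α) := by
    rw [← ENNReal.ofReal_ofNat]
    exact ENNReal.ofReal_le_ofReal (by linarith)
  simp only [Pi.one_apply, one_pow, lintegral_one, μI_univ]
  exact htwo.trans (le_self_pow (one_le_two.trans htwo) (by omega))

lemma integrable_of_ezygNorm_ne_top (hα : 0 ≤ α) (hf : AEStronglyMeasurable f μI)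
    (hN : ezygNorm α f ≠ ∞) : Integrable f μI := by
  refine ⟨hf, ?_⟩
  have hbound := (hasMomentGrowth_one hα).lintegral_enorm_mul_le aemeasurable_one two_pos.le hα hf
  simp only [Pi.one_apply, mul_one] at hbound
  exact hbound.trans_lt (ENNReal.mul_lt_top ENNReal.ofReal_lt_top hN.lt_top)

end ZygmundDuality

section WeightedCauchyTransform

variable {X : Type*} [MeasurableSpace X] {μ : Measure X} {A α B β δ : ℝ} {f h : ℝ → ℂ}

lemma HasMomentGrowth.mono_measure {ν : Measure X} {H : X → ℝ≥0∞} (hH : HasMomentGrowth μ A α H)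
    (hνμ : ν ≤ μ) : HasMomentGrowth ν A α H := fun k hk =>
  (lintegral_mono' hνμ le_rfl).trans (hH k hk)

lemma HasMomentGrowth.indicator {E : Set X} (hE : MeasurableSet E) {H : X → ℝ≥0∞}
    (hH : HasMomentGrowth (μ.restrict E) A α H) : HasMomentGrowth μ A α (E.indicator H) := by
  intro k hk
  have hpow : ∀ x, E.indicator H x ^ (2 * k) = E.indicator (fun x => H x ^ (2 * k)) x := by
    intro x
    by_cases hx : x ∈ E
    · simp only [indicator_of_mem hx]
    · simp only [indicator_of_notMem hx, zero_pow (by omega : 2 * k ≠ 0)]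
  simpa only [hpow, lintegral_indicator hE] using hH k hk

lemma hasMomentGrowth_cauchyTransform (hi : Integrable h)
    (hs : IsBounded (Function.support h)) (hh : HasMomentGrowth volume B β fun y => ‖h y‖ₑ)
    (hδ : 0 < δ) : HasMomentGrowth volume (16 * Real.pi * B) (1 + β)
      fun x : ℝ => ‖cauchyTransform h (x + δ * I)‖ₑ := by
  intro k hk
  have hk' : (0 : ℝ) < k := Nat.cast_pos.2 hk
  refine (lintegral_enorm_cauchyTransform_pow_le hi hs hδ hk).trans
    ((mul_le_mul_right (hh k hk) _).trans_eq ?_)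
  rw [← mul_pow, ← ENNReal.ofReal_mul (by positivity), Real.rpow_add hk', Real.rpow_one]
  ring_nf

lemma cauchyTransform_conj (h : ℝ → ℂ) (z : ℂ) :
    cauchyTransform (fun y => conj (h y)) (conj z) = conj (cauchyTransform h z) := by
  simp only [cauchyTransform, ← integral_conj, map_div₀, map_sub, Complex.conj_ofReal]

lemma integral_cauchyTransform_mul (hf : Integrable f) (hh : Integrable h) (hδ : 0 < δ) :
    ∫ x : ℝ, cauchyTransform f (x + δ * I) * h x =
      -∫ y : ℝ, f y * cauchyTransform h (y - δ * I) := by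
  have hint : Integrable (Function.uncurry fun x y : ℝ => f y / (x + δ * I - y) * h x)
      (volume.prod volume) := by
    have hinv : Measurable fun p : ℝ × ℝ => ((p.1 : ℂ) + δ * I - p.2)⁻¹ := by fun_prop
    refine ((hh.mul_prod hf).mul_bdd (c := δ⁻¹) hinv.aestronglyMeasurable
      (Eventually.of_forall fun p => ?_)).congr (Eventually.of_forall fun p => ?_)
    · rw [norm_inv]
      have := abs_im_le_norm_sub_ofReal (p.1 + δ * I) p.2
      exact inv_anti₀ hδ (by simpa [abs_of_pos hδ] using this)
    · simp only [Function.uncurry]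
      ring
  simp only [cauchyTransform, ← integral_const_mul, ← integral_mul_const, ← integral_neg]
  rw [integral_integral_swap hint]
  refine integral_congr_ae (Eventually.of_forall fun y => ?_)
  refine integral_congr_ae (Eventually.of_forall fun x => ?_)
  simp only
  rw [show (y - δ * I - x : ℂ) = -(x + δ * I - y) by ring, div_neg, mul_neg, neg_neg]
  ring

lemma enorm_integral_cauchyTransform_mul_le (hf : Integrable f) (hh : Integrable h) (hδ : 0 < δ) :
    ‖∫ x : ℝ, cauchyTransform f (x + δ * I) * h x‖ₑ ≤
      ∫⁻ y : ℝ, ‖f y‖ₑ * ‖cauchyTransform (fun x => conj (h x)) (y + δ * I)‖ₑ := by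
  rw [integral_cauchyTransform_mul hf hh hδ, enorm_neg]
  refine (enorm_integral_le_lintegral_enorm _).trans_eq (lintegral_congr fun y => ?_)
  have hconj := cauchyTransform_conj h (y - δ * I)
  rw [map_sub, map_mul, Complex.conj_ofReal, Complex.conj_ofReal, Complex.conj_I, mul_neg,
    sub_neg_eq_add] at hconj
  rw [hconj, enorm_mul, ← ofReal_norm (conj _), RCLike.norm_conj, ofReal_norm]

lemma exists_measurable_mul_eq_norm_mul {F : X → ℂ} (hF : Measurable F) {g : X → ℝ≥0}
    (hg : Measurable g) :
    ∃ h : X → ℂ, Measurable h ∧ (∀ x, ‖h x‖ ≤ g x) ∧ ∀ x, F x * h x = ((‖F x‖ * g x : ℝ) : ℂ) := by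
  refine ⟨fun x => conj (F x) / ‖F x‖ * (g x : ℝ), ?_, fun x => ?_, fun x => ?_⟩
  · have hconj : Measurable fun x => conj (F x) := Complex.continuous_conj.measurable.comp hF
    fun_prop
  · simp only [norm_mul, norm_div, RCLike.norm_conj, Complex.norm_real, norm_norm,
      Real.norm_of_nonneg (g x).coe_nonneg]
    exact mul_le_of_le_one_left (g x).coe_nonneg (div_self_le_one _)
  · obtain hx | hx := eq_or_ne (F x) 0
    · simp [hx]
    have hnorm : (‖F x‖ : ℂ) ≠ 0 := Complex.ofReal_ne_zero.2 (norm_ne_zero_iff.2 hx)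
    push_cast
    rw [← mul_assoc, ← mul_div_assoc, Complex.mul_conj, Complex.normSq_eq_norm_sq]
    push_cast
    field_simp

lemma lintegral_enorm_mul_eq_enorm_integral {F h : X → ℂ} {g : X → ℝ≥0}
    (hFh : ∀ x, F x * h x = ((‖F x‖ * g x : ℝ) : ℂ)) (hi : Integrable (fun x => F x * h x) μ) :
    ∫⁻ x, ‖F x‖ₑ * g x ∂μ = ‖∫ x, F x * h x ∂μ‖ₑ := by
  have hpos : ∀ x, 0 ≤ ‖F x‖ * (g x : ℝ) := fun x => by positivity
  have hi' : Integrable (fun x => ‖F x‖ * (g x : ℝ)) μ := by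
    refine hi.norm.congr (Eventually.of_forall fun x => ?_)
    simp only [hFh, Complex.norm_real, Real.norm_of_nonneg (hpos x)]
  simp only [hFh]
  rw [integral_complex_ofReal, ← ofReal_norm, Complex.norm_real,
    Real.norm_of_nonneg (integral_nonneg hpos),
    ofReal_integral_eq_lintegral_ofReal hi' (Eventually.of_forall hpos)]
  refine lintegral_congr fun x => ?_
  rw [ENNReal.ofReal_mul (norm_nonneg _), ofReal_norm, ENNReal.ofReal_coe_nnreal]

theorem lintegral_enorm_cauchyTransform_mul_le (hf : Integrable f)
    (hs : Function.support f ⊆ Ioo (-1) 1) {g : ℝ → ℝ≥0} (hg : Measurable g)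
    (hgrowth : HasMomentGrowth μI B β fun x => (g x : ℝ≥0∞)) (hB : 0 ≤ B) (hβ : 0 ≤ β)
    (hδ : 0 < δ) :
    ∫⁻ x : ℝ, ‖cauchyTransform f (x + δ * I)‖ₑ * g x ∂μI ≤
      ENNReal.ofReal (2 * 2 ^ (1 + β) * (16 * Real.pi * B)) * ezygNorm (1 + β) f := by
  have hF := continuous_cauchyTransform_line hf hδ
  obtain ⟨h₀, hm₀, hle, heq⟩ := exists_measurable_mul_eq_norm_mul hF.measurable hg
  have hle' : ∀ x, ‖h₀ x‖ₑ ≤ g x := fun x => by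
    rw [enorm_eq_nnnorm]
    exact_mod_cast hle x
  have hi₀ : Integrable h₀ μI := ⟨hm₀.aestronglyMeasurable, (lintegral_mono hle').trans_lt
    (hgrowth.lintegral_ne_top hg.coe_nnreal_ennreal.aemeasurable).lt_top⟩
  set h := (Ioo (-1 : ℝ) 1).indicator h₀ with h_def
  have hh : Integrable h :=
    IntegrableOn.integrable_indicator (show IntegrableOn h₀ _ volume from hi₀) measurableSet_Ioo
  have hconj : Integrable fun x => conj (h x) := Complex.conjCLE.integrable_comp_iff.2 hh
  have hsupp : IsBounded (Function.support fun x => conj (h x)) := by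
    refine (Metric.isBounded_Ioo (-1 : ℝ) 1).subset fun x hx => ?_
    by_contra hxI
    simp [h_def, indicator_of_notMem hxI] at hx
  have hmoments : HasMomentGrowth volume B β fun x => ‖conj (h x)‖ₑ := by
    refine (hgrowth.indicator measurableSet_Ioo).mono fun x => ?_
    rw [← ofReal_norm, RCLike.norm_conj, ofReal_norm, h_def, enorm_indicator_eq_indicator_enorm]
    exact indicator_le_indicator (hle' x)
  calc _ = ‖∫ x : ℝ, cauchyTransform f (x + δ * I) * h x‖ₑ := by
        rw [lintegral_enorm_mul_eq_enorm_integral heq (hi₀.bdd_mul hF.aestronglyMeasurable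
          (Eventually.of_forall (norm_cauchyTransform_line_le hf hδ))), μI,
          ← integral_indicator measurableSet_Ioo]
        simp only [h_def, indicator_mul_right]
    _ ≤ ∫⁻ y : ℝ, ‖f y‖ₑ * ‖cauchyTransform (fun x => conj (h x)) (y + δ * I)‖ₑ :=
        enorm_integral_cauchyTransform_mul_le hf hh hδ
    _ = ∫⁻ y : ℝ, ‖f y‖ₑ * ‖cauchyTransform (fun x => conj (h x)) (y + δ * I)‖ₑ ∂μI := by
        refine (setLIntegral_eq_of_support_subset fun y hy => hs fun hy' => ?_).symm
        simp [hy'] at hy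
    _ ≤ _ := ((hasMomentGrowth_cauchyTransform hconj hsupp hmoments hδ).mono_measure
        (show μI ≤ volume from Measure.restrict_le_self)).lintegral_enorm_mul_le
          (continuous_cauchyTransform_line hconj hδ).enorm.measurable.aemeasurable
          (by positivity) (by positivity) hf.1.restrict

end WeightedCauchyTransform

section ApproximateIdentity

variable {E : Type*} [NormedAddCommGroup E] {f : ℝ → E} {p : ℝ≥0∞} {ε x : ℝ}

lemma lintegral_Ici_two_mul_div_sq {a : ℝ} (ha : 0 ≤ a) :
    ∫⁻ r in Ici a, ENNReal.ofReal (2 * r / (r ^ 2 + 1) ^ 2) = ENNReal.ofReal (a ^ 2 + 1)⁻¹ := by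
  have hderiv : ∀ r ∈ Ici a,
      HasDerivAt (fun r : ℝ => -(r ^ 2 + 1)⁻¹) (2 * r / (r ^ 2 + 1) ^ 2) r := fun r _ => by
    have hsq : HasDerivAt (fun r : ℝ => r ^ 2 + 1) (2 * r) r := by
      simpa using (hasDerivAt_pow 2 r).add_const 1
    exact (hsq.fun_inv (by positivity)).neg.congr_deriv (by ring)
  have hlim : Tendsto (fun r : ℝ => -(r ^ 2 + 1)⁻¹) atTop (𝓝 0) := by
    simpa using (tendsto_atTop_add_const_right _ (1 : ℝ)
      (tendsto_pow_atTop two_ne_zero)).inv_tendsto_atTop.neg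
  have hpos : ∀ r ∈ Ioi a, 0 ≤ 2 * r / (r ^ 2 + 1) ^ 2 := fun r hr => by
    have : 0 < r := ha.trans_lt hr
    positivity
  rw [setLIntegral_congr Ioi_ae_eq_Ici.symm, ← ofReal_integral_eq_lintegral_ofReal
    (integrableOn_Ioi_deriv_of_nonneg' hderiv hpos hlim)
    (ae_restrict_of_forall_mem measurableSet_Ioi hpos),
    integral_Ioi_of_hasDerivAt_of_nonneg' hderiv hpos hlim]
  simp

lemma ofReal_halfPlanePoisson_eq_lintegral (hε : 0 < ε) (s : ℝ) :
    ENNReal.ofReal (halfPlanePoisson ε s) =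
      ∫⁻ r in Ici (|s| / ε), ENNReal.ofReal (ε⁻¹ * (2 * r / (r ^ 2 + 1) ^ 2)) := by
  simp only [ENNReal.ofReal_mul (inv_pos.2 hε).le]
  rw [lintegral_const_mul _ (by fun_prop), lintegral_Ici_two_mul_div_sq (by positivity),
    ← ENNReal.ofReal_mul (by positivity), div_pow, sq_abs, halfPlanePoisson]
  congr 1
  field_simp

lemma lintegral_halfPlanePoisson_mul_eq_setLIntegral {φ : ℝ → ℝ≥0∞} (hφ : AEMeasurable φ)
    (x : ℝ) (hε : 0 < ε) :
    ∫⁻ y, ENNReal.ofReal (halfPlanePoisson ε (x - y)) * φ y =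
      ∫⁻ r in Ici (0 : ℝ), ENNReal.ofReal (ε⁻¹ * (2 * r / (r ^ 2 + 1) ^ 2)) *
        ∫⁻ y in Metric.closedBall x (ε * r), φ y := by
  have hP : Measurable fun y => ENNReal.ofReal (halfPlanePoisson ε (x - y)) := by
    have := measurable_halfPlanePoisson ε
    fun_prop
  have hset (y : ℝ) : Ici (|x - y| / ε) = {r | y ∈ Metric.closedBall x (ε * r)} ∩ Ici 0 := by
    ext r
    rw [mem_Ici, mem_inter_iff, mem_ofPred_eq, mem_Ici, Metric.mem_closedBall, dist_comm,
      Real.dist_eq, div_le_iff₀' hε, iff_self_and]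
    exact fun h => nonneg_of_mul_nonneg_right ((abs_nonneg _).trans h) hε
  have hmem : MeasurableSet {z : ℝ × ℝ | z.2 ∈ Metric.closedBall x (ε * z.1)} :=
    measurableSet_le (f := fun z : ℝ × ℝ => dist z.2 x) (g := fun z => ε * z.1)
      (by fun_prop) (by fun_prop)
  calc _ = ∫⁻ y, ENNReal.ofReal (halfPlanePoisson ε (x - y)) ∂volume.withDensity φ := by
        rw [lintegral_withDensity_eq_lintegral_mul₀ hφ hP.aemeasurable]
        simp only [Pi.mul_apply, mul_comm]
    _ = ∫⁻ y, ∫⁻ r in {r | y ∈ Metric.closedBall x (ε * r)},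
          ENNReal.ofReal (ε⁻¹ * (2 * r / (r ^ 2 + 1) ^ 2)) ∂volume.restrict (Ici 0)
          ∂volume.withDensity φ := by
        refine lintegral_congr fun y => ?_
        have hy : MeasurableSet {r | y ∈ Metric.closedBall x (ε * r)} :=
          measurable_prodMk_right hmem
        rw [ofReal_halfPlanePoisson_eq_lintegral hε, hset, Measure.restrict_restrict hy]
    _ = ∫⁻ r in Ici (0 : ℝ), ENNReal.ofReal (ε⁻¹ * (2 * r / (r ^ 2 + 1) ^ 2)) *
          volume.withDensity φ (Metric.closedBall x (ε * r)) :=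
        (lintegral_mul_measure_setOf hmem (by fun_prop)).symm
    _ = _ := by simp only [withDensity_apply _ Metric.isClosed_closedBall.measurableSet]

lemma lintegral_halfPlanePoisson_mul_eq_setLAverage {φ : ℝ → ℝ≥0∞} (hφ : AEMeasurable φ)
    (x : ℝ) (hε : 0 < ε) :
    ∫⁻ y, ENNReal.ofReal (halfPlanePoisson ε (x - y)) * φ y =
      ∫⁻ r in Ioi (0 : ℝ), ENNReal.ofReal (4 * r ^ 2 / (r ^ 2 + 1) ^ 2) *
        ⨍⁻ y in Metric.closedBall x (ε * r), φ y ∂volume := by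
  rw [lintegral_halfPlanePoisson_mul_eq_setLIntegral hφ x hε,
    setLIntegral_congr Ioi_ae_eq_Ici.symm]
  refine setLIntegral_congr_fun measurableSet_Ioi fun r (hr : 0 < r) => ?_
  have hvol : 0 < 2 * (ε * r) := by positivity
  rw [setLAverage_eq, Real.volume_closedBall, ENNReal.div_eq_inv_mul, ← mul_assoc,
    ← ENNReal.ofReal_inv_of_pos hvol, ← ENNReal.ofReal_mul (by positivity)]
  congr 2
  field_simp
  norm_num

lemma measurable_setLAverage_closedBall (φ : ℝ → ℝ≥0∞) (x : ℝ) :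
    Measurable fun r => ⨍⁻ y in Metric.closedBall x r, φ y ∂volume := by
  simp only [setLAverage_eq, Real.volume_closedBall]
  have hmono : Monotone fun r => ∫⁻ y in Metric.closedBall x r, φ y := fun _ _ hrs =>
    lintegral_mono_set (Metric.closedBall_subset_closedBall hrs)
  have := hmono.measurable
  fun_prop

lemma tendsto_lintegral_halfPlanePoisson_mul_zero {φ : ℝ → ℝ≥0∞} (hφ : AEMeasurable φ)
    (hlim : Tendsto (fun r => ⨍⁻ y in Metric.closedBall x r, φ y ∂volume) (𝓝[>] 0) (𝓝 0))
    {M : ℝ≥0∞} (hM : M ≠ ∞) (hbound : ∀ r > 0, ⨍⁻ y in Metric.closedBall x r, φ y ∂volume ≤ M) :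
    Tendsto (fun ε => ∫⁻ y, ENNReal.ofReal (halfPlanePoisson ε (x - y)) * φ y)
      (𝓝[>] 0) (𝓝 0) := by
  have hdom := tendsto_lintegral_filter_of_dominated_convergence (l := 𝓝[>] (0 : ℝ))
    (μ := volume.restrict (Ioi 0)) (f := fun _ => 0)
    (F := fun ε r => ENNReal.ofReal (4 * r ^ 2 / (r ^ 2 + 1) ^ 2) *
      ⨍⁻ y in Metric.closedBall x (ε * r), φ y ∂volume)
    (fun r => ENNReal.ofReal (4 * halfPlanePoisson 1 r) * M) ?_ ?_ ?_ ?_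
  · rw [lintegral_zero] at hdom
    refine hdom.congr' ?_
    filter_upwards [self_mem_nhdsWithin] with ε hε
    exact (lintegral_halfPlanePoisson_mul_eq_setLAverage hφ x hε).symm
  · refine Eventually.of_forall fun ε => Measurable.mul (by fun_prop) ?_
    exact (measurable_setLAverage_closedBall φ x).comp (measurable_const_mul ε)
  · filter_upwards [self_mem_nhdsWithin] with ε hε
    refine ae_restrict_of_forall_mem measurableSet_Ioi fun r hr => ?_
    refine mul_le_mul' (ENNReal.ofReal_le_ofReal ?_) (hbound _ (mul_pos hε hr))
    rw [halfPlanePoisson, div_le_iff₀ (by positivity)]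
    field_simp
    nlinarith [sq_nonneg r]
  · rw [lintegral_mul_const _ (by fun_prop)]
    refine ENNReal.mul_ne_top (ne_top_of_le_ne_top ?_ (setLIntegral_le_lintegral _ _)) hM
    simp only [ENNReal.ofReal_mul zero_le_four]
    rw [lintegral_const_mul _ (by fun_prop), lintegral_halfPlanePoisson one_pos]
    finiteness
  · refine ae_restrict_of_forall_mem measurableSet_Ioi fun r (hr : 0 < r) => ?_
    have hscale : Tendsto (fun ε => ε * r) (𝓝[>] 0) (𝓝[>] 0) := by
      refine tendsto_nhdsWithin_iff.2 ⟨?_, ?_⟩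
      · simpa using ((continuous_mul_const r).tendsto 0).mono_left nhdsWithin_le_nhds
      · filter_upwards [self_mem_nhdsWithin] with ε hε using mul_pos hε hr
    simpa using ENNReal.Tendsto.const_mul (hlim.comp hscale) (Or.inr ENNReal.ofReal_ne_top)

lemma setLIntegral_enorm_closedBall_le (hp : 1 ≤ p) (hf : AEStronglyMeasurable f) (x : ℝ) {r : ℝ}
    (hr : 0 ≤ r) :
    ∫⁻ y in Metric.closedBall x r, ‖f y‖ₑ ≤ eLpNorm f p volume * ENNReal.ofReal (1 + 2 * r) := by
  have hexp : (1 : ℝ) - 1 / p.toReal ∈ Icc (0 : ℝ) 1 := by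
    refine ⟨?_, by simp⟩
    obtain rfl | hp' := eq_or_ne p ∞
    · simp
    have : 1 ≤ p.toReal := by simpa using ENNReal.toReal_mono hp' hp
    exact sub_nonneg.2 ((div_le_one (by positivity)).2 this)
  have hpow : ENNReal.ofReal (2 * r) ^ ((1 : ℝ) - 1 / p.toReal) ≤ ENNReal.ofReal (1 + 2 * r) := by
    rw [ENNReal.ofReal_rpow_of_nonneg (by positivity) hexp.1]
    refine ENNReal.ofReal_le_ofReal ?_
    calc (2 * r) ^ ((1 : ℝ) - 1 / p.toReal) ≤ (1 + 2 * r) ^ ((1 : ℝ) - 1 / p.toReal) :=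
          Real.rpow_le_rpow (by positivity) (by linarith) hexp.1
      _ ≤ (1 + 2 * r) ^ (1 : ℝ) := Real.rpow_le_rpow_of_exponent_le (by linarith) hexp.2
      _ = 1 + 2 * r := Real.rpow_one _
  have hHolder := eLpNorm_le_eLpNorm_mul_rpow_measure_univ hp
    (hf.restrict (s := Metric.closedBall x r))
  rw [eLpNorm_one_eq_lintegral_enorm, Measure.restrict_apply_univ, Real.volume_closedBall,
    ENNReal.toReal_one, div_one] at hHolder
  exact hHolder.trans (mul_le_mul' (eLpNorm_restrict_le ..) hpow)

lemma exists_setLAverage_enorm_sub_le (hp : 1 ≤ p) (hf : MemLp f p) (c : E)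
    (hlim : Tendsto (fun r => ⨍⁻ y in Metric.closedBall x r, ‖f y - c‖ₑ ∂volume) (𝓝[>] 0) (𝓝 0)) :
    ∃ M ≠ ∞, ∀ r > 0, ⨍⁻ y in Metric.closedBall x r, ‖f y - c‖ₑ ∂volume ≤ M := by
  obtain ⟨r₀, hr₀ : 0 < r₀, hsmall⟩ := mem_nhdsGT_iff_exists_Ioc_subset.1
    ((hlim.eventually_lt_const one_pos).mono fun _ h => h.le)
  refine ⟨max 1 (eLpNorm f p volume * ENNReal.ofReal (1 / (2 * r₀) + 1) + ‖c‖ₑ),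
    by have := hf.eLpNorm_ne_top; finiteness, fun r hr => ?_⟩
  obtain hle | hlt := le_or_gt r r₀
  · exact le_max_of_le_left (hsmall ⟨hr, hle⟩)
  refine le_trans ?_ (le_max_right _ _)
  rw [setLAverage_eq]
  refine ENNReal.div_le_of_le_mul ?_
  calc ∫⁻ y in Metric.closedBall x r, ‖f y - c‖ₑ
      ≤ ∫⁻ y in Metric.closedBall x r, (‖f y‖ₑ + ‖c‖ₑ) := lintegral_mono fun y => enorm_sub_le
    _ ≤ eLpNorm f p volume * ENNReal.ofReal (1 + 2 * r) +
          ‖c‖ₑ * volume (Metric.closedBall x r) := by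
        rw [lintegral_add_right _ measurable_const, setLIntegral_const]
        gcongr
        exact setLIntegral_enorm_closedBall_le hp hf.1 x hr.le
    _ ≤ _ := by
        rw [add_mul, Real.volume_closedBall, mul_assoc, ← ENNReal.ofReal_mul (by positivity)]
        gcongr
        rw [add_mul, one_mul, div_mul_eq_mul_div, one_mul]
        gcongr
        rw [one_le_div (by positivity)]
        gcongr

theorem ae_tendsto_lintegral_halfPlanePoisson_enorm_sub (hp : 1 ≤ p) (hf : MemLp f p) :
    ∀ᵐ x, Tendsto
      (fun ε => ∫⁻ y, ENNReal.ofReal (halfPlanePoisson ε (x - y)) * ‖f y - f x‖ₑ)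
      (𝓝[>] 0) (𝓝 0) := by
  filter_upwards [(Besicovitch.vitaliFamily (volume : Measure ℝ)).ae_tendsto_lintegral_enorm_sub_div
    (hf.locallyIntegrable hp)] with x hx
  have hlim : Tendsto (fun r => ⨍⁻ y in Metric.closedBall x r, ‖f y - f x‖ₑ ∂volume)
      (𝓝[>] 0) (𝓝 0) := by
    simp only [setLAverage_eq]
    exact hx.comp (Besicovitch.tendsto_filterAt volume x)
  obtain ⟨M, hM, hbound⟩ := exists_setLAverage_enorm_sub_le hp hf (f x) hlim
  exact tendsto_lintegral_halfPlanePoisson_mul_zero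
    (hf.1.sub aestronglyMeasurable_const).enorm hlim hM hbound

lemma tendsto_integral_mul_of_norm_le_halfPlanePoisson {f : ℝ → ℂ}
    (hx : Tendsto (fun ε => ∫⁻ y, ENNReal.ofReal (halfPlanePoisson ε (x - y)) * ‖f y - f x‖ₑ)
      (𝓝[>] 0) (𝓝 0))
    {κ : ℝ → ℝ → ℂ} {c : ℂ} {M : ℝ} (hM : 0 ≤ M)
    (hκ : ∀ ε > 0, ∀ y, ‖κ ε y‖ ≤ M * halfPlanePoisson ε (x - y))
    (hi : ∀ ε > 0, Integrable (κ ε)) (hfi : ∀ ε > 0, Integrable fun y => κ ε y * f y)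
    (hc : ∀ ε > 0, ∫ y, κ ε y = c) :
    Tendsto (fun ε => ∫ y, κ ε y * f y) (𝓝[>] 0) (𝓝 (c * f x)) := by
  rw [tendsto_iff_edist_tendsto_0]
  have hM' := ENNReal.Tendsto.const_mul (a := ENNReal.ofReal M) hx (Or.inr ENNReal.ofReal_ne_top)
  rw [mul_zero] at hM'
  refine tendsto_of_tendsto_of_tendsto_of_le_of_le' tendsto_const_nhds hM'
    (Eventually.of_forall fun _ => zero_le) ?_
  filter_upwards [self_mem_nhdsWithin] with ε hε
  rw [edist_eq_enorm_sub, ← hc ε hε, ← integral_mul_const,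
    ← integral_sub (hfi ε hε) ((hi ε hε).mul_const _),
    ← lintegral_const_mul' _ _ ENNReal.ofReal_ne_top]
  refine (enorm_integral_le_lintegral_enorm _).trans (lintegral_mono fun y => ?_)
  simp only
  rw [← mul_sub, enorm_mul, ← mul_assoc, ← ENNReal.ofReal_mul hM, ← ofReal_norm (κ ε y)]
  gcongr
  exact hκ ε hε y

end ApproximateIdentity

/-! ### Boundary values on the real line -/

section WeakCompactness

variable {ι : Type*} {l : Filter ι} [l.NeBot]

lemma exists_ultrafilter_tendsto_inner {𝕜 H : Type*} [RCLike 𝕜] [NormedAddCommGroup H]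
    [InnerProductSpace 𝕜 H] [CompleteSpace H] {v : ι → H} {R : ℝ} (hv : ∀ i, ‖v i‖ ≤ R) :
    ∃ w : H, ∃ U : Ultrafilter ι, ↑U ≤ l ∧
      ∀ u, Tendsto (fun i => inner 𝕜 u (v i)) U (𝓝 (inner 𝕜 u w)) := by
  let Φ (i : ι) : WeakDual 𝕜 H := StrongDual.toWeakDual (InnerProductSpace.toDual 𝕜 H (v i))
  obtain ⟨φ, -, hφ⟩ := (WeakDual.isCompact_closedBall (𝕜 := 𝕜) (E := H) 0 R).ultrafilter_le_nhds
    ((Ultrafilter.of l).map Φ) <| by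
      rw [le_principal_iff, Ultrafilter.mem_coe, Ultrafilter.mem_map]
      exact Eventually.of_forall fun i => by simpa [Φ] using hv i
  refine ⟨(InnerProductSpace.toDual 𝕜 H).symm (WeakDual.toStrongDual φ), Ultrafilter.of l,
    Ultrafilter.of_le l, fun u => ?_⟩
  have hu := ((RCLike.continuous_conj (K := 𝕜)).comp (WeakDual.eval_continuous u)).tendsto φ
  rw [← inner_conj_symm, InnerProductSpace.toDual_symm_apply]
  exact (hu.comp hφ).congr fun i => by simp [Φ]

lemma exists_memLp_two_tendsto_integral_mul {α : Type*} [MeasurableSpace α] {μ : Measure α}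
    {g : ι → α → ℂ} {R : ℝ≥0∞} (hg : ∀ i, MemLp (g i) 2 μ) (hgR : ∀ i, eLpNorm (g i) 2 μ ≤ R)
    (hR : R ≠ ∞) :
    ∃ k, MemLp k 2 μ ∧ ∃ U : Ultrafilter ι, ↑U ≤ l ∧ ∀ v, MemLp v 2 μ →
      Tendsto (fun i => ∫ x, v x * g i x ∂μ) U (𝓝 (∫ x, v x * k x ∂μ)) := by
  obtain ⟨k, U, hU, hlim⟩ := exists_ultrafilter_tendsto_inner (𝕜 := ℂ) (l := l)
    (v := fun i => (hg i).toLp) (R := R.toReal) fun i => by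
      rw [Lp.norm_toLp]
      exact ENNReal.toReal_mono hR (hgR i)
  refine ⟨k, Lp.memLp k, U, hU, fun v hv => ?_⟩
  have hinner (w : Lp ℂ 2 μ) : inner ℂ hv.star.toLp w = ∫ x, v x * w x ∂μ := by
    rw [L2.inner_def]
    refine integral_congr_ae ?_
    filter_upwards [hv.star.coeFn_toLp] with x hx
    rw [hx, RCLike.inner_apply', Pi.star_apply, RCLike.star_def, RCLike.conj_conj]
  rw [← hinner]
  refine (hlim _).congr fun i => ?_
  rw [hinner]
  refine integral_congr_ae ?_
  filter_upwards [(hg i).coeFn_toLp] with x hx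
  rw [hx]

end WeakCompactness

section FatouTheorem

variable {K : ℂ → ℂ} {C δ ε : ℝ}

lemma inv_sub_isBigO_norm_inv (c : ℂ) :
    (fun z => (z - c)⁻¹) =O[cobounded ℂ] fun z => ‖z‖⁻¹ := by
  refine Asymptotics.IsBigO.of_bound 2 (hasBasis_cobounded_norm.eventually_iff.2
    ⟨2 * ‖c‖ + 1, trivial, fun z (hz : 2 * ‖c‖ + 1 ≤ ‖z‖) => ?_⟩)
  have hpos : 0 < ‖z‖ := by linarith [norm_nonneg c]
  have hsub : ‖z‖ / 2 ≤ ‖z - c‖ := by linarith [norm_sub_norm_le z c]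
  calc ‖(z - c)⁻¹‖ = ‖z - c‖⁻¹ := norm_inv _
    _ ≤ (‖z‖ / 2)⁻¹ := by gcongr
    _ = 2 * ‖‖z‖⁻¹‖ := by rw [norm_inv, norm_norm, inv_div, div_eq_mul_inv]

lemma dslope_div_sub_isBigO (hb : ∀ z : ℂ, 0 < z.im → ‖K z‖ ≤ C) (hδ : 0 < δ) (c d : ℂ) :
    (fun z => dslope K c z / (z - d)) =O[cobounded ℂ ⊓ 𝓟 {z | δ ≤ z.im}]
      fun z => (‖z‖ ^ 2)⁻¹ := by
  have hnum : (fun z => K z - K c) =O[cobounded ℂ ⊓ 𝓟 {z | δ ≤ z.im}] fun _ => (1 : ℝ) := by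
    refine (Asymptotics.IsBigO.of_bound C ?_).sub (Asymptotics.isBigO_const_const _ one_ne_zero _)
    filter_upwards [mem_inf_of_right (mem_principal_self _)] with z (hz : δ ≤ z.im)
    simpa using hb z (hδ.trans_le hz)
  have hprod := (hnum.mul ((inv_sub_isBigO_norm_inv c).mono inf_le_left)).mul
    ((inv_sub_isBigO_norm_inv d).mono inf_le_left)
  refine hprod.congr' ?_ (Eventually.of_forall fun z => by ring)
  filter_upwards [mem_inf_of_left (eventually_ne_cobounded c)] with z hz
  rw [dslope_of_ne _ hz, slope_def_field, div_eq_mul_inv, div_eq_mul_inv]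

lemma im_add_mul_I (x δ : ℝ) : ((x : ℂ) + δ * I).im = δ := by simp

lemma continuous_line_of_differentiableOn (hK : DifferentiableOn ℂ K {z | 0 < z.im})
    (hδ : 0 < δ) : Continuous fun t : ℝ => K (t + δ * I) :=
  continuous_horizontal_line (hK.continuousOn.mono fun _ hz => hδ.trans_le hz)

lemma ofReal_halfPlanePoisson_sub (δ ε x t : ℝ) :
    (halfPlanePoisson ε (x - t) : ℂ) =
      ε / ((t + δ * I - (x + (δ + ε : ℝ) * I)) * (t + δ * I - (x + (δ - ε : ℝ) * I))) := by
  rw [halfPlanePoisson]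
  push_cast
  congr 1
  linear_combination (ε : ℂ) ^ 2 * Complex.I_sq

lemma integrable_ofReal_halfPlanePoisson_sub (hε : 0 < ε) (x : ℝ) :
    Integrable fun t => (halfPlanePoisson ε (x - t) : ℂ) :=
  ((integrable_halfPlanePoisson hε).comp_sub_left x).ofReal

lemma integral_ofReal_halfPlanePoisson_sub (hε : 0 < ε) (x : ℝ) :
    ∫ t, (halfPlanePoisson ε (x - t) : ℂ) = Real.pi := by
  rw [integral_complex_ofReal, integral_sub_left_eq_self (halfPlanePoisson ε) volume x,
    integral_halfPlanePoisson hε]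

-- Subtracting the constant `K z₀`, with `z₀ = x + (δ + ε) i`, turns the integrand into `ε` times
-- `(K z - K z₀) / ((z - z₀) (z - z₁))`, `z₁ = x + (δ - ε) i`, holomorphic above the line.
lemma integral_halfPlanePoisson_mul_line (hK : DifferentiableOn ℂ K {z | 0 < z.im})
    (hb : ∀ z : ℂ, 0 < z.im → ‖K z‖ ≤ C) (hδ : 0 < δ) (hε : 0 < ε) (x : ℝ) :
    ∫ t : ℝ, halfPlanePoisson ε (x - t) * K (t + δ * I) = Real.pi * K (x + (δ + ε : ℝ) * I) := by
  set z₀ : ℂ := x + (δ + ε : ℝ) * I with hz₀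
  set z₁ : ℂ := x + (δ - ε : ℝ) * I with hz₁
  have hz₀_im : z₀.im = δ + ε := im_add_mul_I _ _
  have hz₁_im : z₁.im = δ - ε := im_add_mul_I _ _
  have hne {z : ℂ} (hz : δ ≤ z.im) : z - z₁ ≠ 0 := fun h => by
    rw [sub_eq_zero.1 h, hz₁_im] at hz
    linarith
  have hG : DifferentiableOn ℂ (fun z => dslope K z₀ z / (z - z₁)) {z | δ ≤ z.im} :=
    (((Complex.differentiableOn_dslope (UpperHalfPlane.isOpen_upperHalfPlaneSet.mem_nhds
      (by rw [mem_ofPred_eq, hz₀_im]; positivity))).2 hK).mono fun z hz => hδ.trans_le hz).div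
      (differentiableOn_id.sub_const _) fun z hz => hne hz
  have hzero := integral_horizontal_line_eq_zero hG (dslope_div_sub_isBigO hb hδ z₀ z₁)
  have hP := integrable_ofReal_halfPlanePoisson_sub hε x
  have hPK : Integrable fun t : ℝ => halfPlanePoisson ε (x - t) * K (t + δ * I) :=
    hP.mul_bdd (c := C) (continuous_line_of_differentiableOn hK hδ).aestronglyMeasurable
      (Eventually.of_forall fun t => hb _ (by rwa [im_add_mul_I]))
  have hconst : ∫ t, (halfPlanePoisson ε (x - t) : ℂ) * K z₀ = Real.pi * K z₀ := by
    rw [integral_mul_const, integral_ofReal_halfPlanePoisson_sub hε]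
  rw [← hconst, ← sub_eq_zero, ← integral_sub hPK (hP.mul_const _)]
  calc _ = ∫ t : ℝ, ε * (dslope K z₀ (t + δ * I) / (t + δ * I - z₁)) := by
        refine integral_congr_ae (Eventually.of_forall fun t => ?_)
        have hsub : (t + δ * I : ℂ) - z₀ ≠ 0 := fun h => by
          have := congrArg Complex.im (sub_eq_zero.1 h)
          rw [hz₀_im, im_add_mul_I] at this
          linarith
        simp only
        rw [dslope_of_ne _ (sub_ne_zero.1 hsub), slope_def_field, ← mul_sub,
          ofReal_halfPlanePoisson_sub, ← hz₀, ← hz₁]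
        field_simp
    _ = 0 := by rw [integral_const_mul, hzero, mul_zero]

lemma memLp_two_halfPlanePoisson (hε : 0 < ε) (x : ℝ) :
    MemLp (fun t => (halfPlanePoisson ε (x - t) : ℂ)) 2 := by
  have hP := (integrable_halfPlanePoisson hε).comp_sub_left x
  refine MemLp.ofReal ((memLp_two_iff_integrable_sq hP.1).2 ?_)
  simp only [sq]
  refine hP.mul_bdd (c := ε⁻¹) hP.1 (Eventually.of_forall fun t => ?_)
  rw [Real.norm_of_nonneg (halfPlanePoisson_nonneg hε.le _), halfPlanePoisson,
    div_le_iff₀ (by positivity), inv_mul_eq_div, le_div_iff₀ hε]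
  linarith [sq_nonneg (x - t)]

theorem exists_memLp_two_integral_halfPlanePoisson_mul_eq
    (hK : DifferentiableOn ℂ K {z | 0 < z.im}) (hb : ∀ z : ℂ, 0 < z.im → ‖K z‖ ≤ C)
    {R : ℝ≥0∞} (hR : R ≠ ∞)
    (hKR : ∀ δ : ℝ, 0 < δ → eLpNorm (fun t : ℝ => K (t + δ * I)) 2 volume ≤ R) :
    ∃ k : ℝ → ℂ, MemLp k 2 ∧ ∀ x ε : ℝ, 0 < ε →
      ∫ t, halfPlanePoisson ε (x - t) * k t = Real.pi * K (x + ε * I) := by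
  have hpos (n : ℕ) : (0 : ℝ) < 1 / (n + 1) := Nat.one_div_pos_of_nat
  obtain ⟨k, hk, U, hU, hlim⟩ := exists_memLp_two_tendsto_integral_mul (l := atTop) (R := R)
    (g := fun (n : ℕ) (t : ℝ) => K (t + (1 / (n + 1) : ℝ) * I))
    (fun n => ⟨(continuous_line_of_differentiableOn hK (hpos n)).aestronglyMeasurable,
      (hKR _ (hpos n)).trans_lt hR.lt_top⟩) (fun n => hKR _ (hpos n)) hR
  refine ⟨k, hk, fun x ε hε => tendsto_nhds_unique (hlim _ (memLp_two_halfPlanePoisson hε x)) ?_⟩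
  simp only [integral_halfPlanePoisson_mul_line hK hb (hpos _) hε]
  have hline : Tendsto (fun n : ℕ => (x : ℂ) + (1 / (n + 1) + ε : ℝ) * I) atTop
      (𝓝 (x + (0 + ε : ℝ) * I)) :=
    ((Complex.continuous_ofReal.tendsto _).comp
      (tendsto_one_div_add_atTop_nhds_zero_nat.add_const ε)).mul_const I |>.const_add _
  rw [zero_add] at hline
  have hcont : ContinuousAt K (x + ε * I) :=
    (hK.differentiableAt (UpperHalfPlane.isOpen_upperHalfPlaneSet.mem_nhds
      (by rwa [mem_ofPred_eq, im_add_mul_I]))).continuousAt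
  exact ((hcont.tendsto.comp hline).const_mul _).mono_left hU

lemma ae_exists_tendsto_of_eLpNorm_line_le (hK : DifferentiableOn ℂ K {z | 0 < z.im})
    (hb : ∀ z : ℂ, 0 < z.im → ‖K z‖ ≤ C) {R : ℝ≥0∞} (hR : R ≠ ∞)
    (hKR : ∀ δ : ℝ, 0 < δ → eLpNorm (fun t : ℝ => K (t + δ * I)) 2 volume ≤ R) :
    ∀ᵐ x : ℝ, ∃ l, Tendsto (fun ε : ℝ => K (x + ε * I)) (𝓝[>] 0) (𝓝 l) := by
  obtain ⟨k, hk, hrep⟩ := exists_memLp_two_integral_halfPlanePoisson_mul_eq hK hb hR hKR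
  filter_upwards [ae_tendsto_lintegral_halfPlanePoisson_enorm_sub one_le_two hk] with x hx
  have hlim := tendsto_integral_mul_of_norm_le_halfPlanePoisson
    (κ := fun ε t => (halfPlanePoisson ε (x - t) : ℂ)) (c := Real.pi) hx zero_le_one
    (fun ε hε t => by
      rw [Complex.norm_real, Real.norm_of_nonneg (halfPlanePoisson_nonneg hε.le _), one_mul])
    (fun ε hε => integrable_ofReal_halfPlanePoisson_sub hε x)
    (fun ε hε => (memLp_two_halfPlanePoisson hε x).integrable_mul hk)
    (fun ε hε => integral_ofReal_halfPlanePoisson_sub hε x)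
  refine ⟨(Real.pi : ℂ)⁻¹ * (Real.pi * k x), (hlim.const_mul (Real.pi : ℂ)⁻¹).congr' ?_⟩
  filter_upwards [self_mem_nhdsWithin] with ε hε
  rw [hrep x ε hε, inv_mul_cancel_left₀ (Complex.ofReal_ne_zero.2 Real.pi_ne_zero)]

lemma norm_inv_add_mul_I_sq (t : ℝ) (δ : ℝ) :
    ‖((t : ℂ) + δ * I)⁻¹‖ ^ 2 = (t ^ 2 + δ ^ 2)⁻¹ := by
  rw [norm_inv, inv_pow, Complex.sq_norm, Complex.normSq_add_mul_I]

lemma memLp_two_inv_add_mul_I (hδ : 0 < δ) : MemLp (fun t : ℝ => ((t : ℂ) + δ * I)⁻¹) 2 := by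
  rw [memLp_two_iff_integrable_sq_norm (by fun_prop)]
  simp only [norm_inv_add_mul_I_sq]
  refine ((integrable_halfPlanePoisson hδ).const_mul δ⁻¹).congr (Eventually.of_forall fun t => ?_)
  simp only [halfPlanePoisson]
  field_simp

lemma add_I_ne_zero {z : ℂ} (hz : 0 < z.im) : z + I ≠ 0 := fun h => by
  have := congrArg Complex.im h
  simp only [Complex.add_im, Complex.I_im, Complex.zero_im] at this
  linarith

lemma norm_div_add_I_line_le (hb : ∀ z : ℂ, 0 < z.im → ‖K z‖ ≤ C) (hδ : 0 < δ) (t : ℝ) :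
    ‖K (t + δ * I) / (t + δ * I + I)‖ ≤ C * ‖((t : ℂ) + (1 : ℝ) * I)⁻¹‖ := by
  have hinv : ‖((t : ℂ) + (δ + 1 : ℝ) * I)⁻¹‖ ≤ ‖((t : ℂ) + (1 : ℝ) * I)⁻¹‖ := by
    rw [← sq_le_sq₀ (norm_nonneg _) (norm_nonneg _), norm_inv_add_mul_I_sq, norm_inv_add_mul_I_sq]
    gcongr
    linarith
  have hline : (t : ℂ) + δ * I + I = t + (δ + 1 : ℝ) * I := by push_cast; ring
  rw [div_eq_mul_inv, norm_mul, hline]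
  have hKC := hb (t + δ * I) (by rwa [im_add_mul_I])
  exact mul_le_mul hKC hinv (norm_nonneg _) ((norm_nonneg _).trans hKC)

-- Dividing by `z + i` makes a bounded function square integrable along horizontal lines.
theorem ae_exists_tendsto_of_norm_le (hK : DifferentiableOn ℂ K {z | 0 < z.im})
    (hb : ∀ z : ℂ, 0 < z.im → ‖K z‖ ≤ C) :
    ∀ᵐ x : ℝ, ∃ l, Tendsto (fun ε : ℝ => K (x + ε * I)) (𝓝[>] 0) (𝓝 l) := by
  have hdiv : DifferentiableOn ℂ (fun z => K z / (z + I)) {z | 0 < z.im} :=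
    hK.div (differentiableOn_id.add_const I) fun z hz => add_I_ne_zero hz
  have hbound : ∀ z : ℂ, 0 < z.im → ‖K z / (z + I)‖ ≤ C := fun z hz => by
    have him : 1 ≤ (z + I).im := by simpa using hz.le
    rw [norm_div]
    exact (div_le_self (norm_nonneg _) (him.trans ((le_abs_self _).trans
      (Complex.abs_im_le_norm _)))).trans (hb z hz)
  have hL2 : ∀ δ : ℝ, 0 < δ → eLpNorm (fun t : ℝ => K (t + δ * I) / (t + δ * I + I)) 2 volume ≤
      eLpNorm (fun t : ℝ => C * ‖((t : ℂ) + (1 : ℝ) * I)⁻¹‖) 2 volume := fun δ hδ =>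
    eLpNorm_mono_real (norm_div_add_I_line_le hb hδ)
  filter_upwards [ae_exists_tendsto_of_eLpNorm_line_le hdiv hbound
    ((memLp_two_inv_add_mul_I one_pos).norm.const_mul C).eLpNorm_ne_top hL2] with x ⟨l, hl⟩
  have hline : Tendsto (fun ε : ℝ => (x : ℂ) + ε * I + I) (𝓝[>] 0) (𝓝 (x + (0 : ℝ) * I + I)) :=
    Continuous.tendsto' (by fun_prop) _ _ rfl |>.mono_left nhdsWithin_le_nhds
  refine ⟨l * (x + (0 : ℝ) * I + I), (hl.mul hline).congr' ?_⟩
  filter_upwards [self_mem_nhdsWithin] with ε hε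
  exact div_mul_cancel₀ _ (add_I_ne_zero (by rwa [im_add_mul_I]))

end FatouTheorem

section CauchyTransformBoundary

variable {u : ℝ → ℝ} {f : ℝ → ℂ}

lemma tendsto_one_div_add_one_nhdsGT :
    Tendsto (fun n : ℕ => 1 / (n + 1 : ℝ)) atTop (𝓝[>] 0) :=
  tendsto_nhdsWithin_iff.2
    ⟨tendsto_one_div_add_atTop_nhds_zero_nat, Eventually.of_forall fun _ =>
      mem_Ioi.2 Nat.one_div_pos_of_nat⟩

lemma cauchyTransform_im_nonpos (hu : Integrable u) (h0 : 0 ≤ u) {z : ℂ} (hz : 0 < z.im) :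
    (cauchyTransform (fun y => u y) z).im ≤ 0 := by
  rw [← Complex.re_add_im z, cauchyTransform_im hu hz]
  exact neg_nonpos.2 (integral_nonneg fun y => mul_nonneg (h0 y) (halfPlanePoisson_nonneg hz.le _))

lemma one_le_norm_cauchyTransform_sub_I (hu : Integrable u) (h0 : 0 ≤ u) {z : ℂ} (hz : 0 < z.im) :
    1 ≤ ‖cauchyTransform (fun y => u y) z - I‖ := by
  refine le_trans ?_ (Complex.abs_im_le_norm _)
  rw [Complex.sub_im, Complex.I_im, abs_sub_comm]
  exact le_trans (by linarith [cauchyTransform_im_nonpos hu h0 hz]) (le_abs_self _)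

-- As `u ≥ 0`, the transform `F` takes values in the closed lower half plane, so `(F - i)⁻¹` is
-- bounded and has boundary values; by Fatou's lemma they are almost nowhere zero.
theorem ae_exists_tendsto_cauchyTransform_of_lintegral_le {μ : Measure ℝ} (hμ : μ ≪ volume)
    (hu : Integrable u) (h0 : 0 ≤ u) {M : ℝ≥0∞} (hM : M ≠ ∞)
    (hbound : ∀ δ : ℝ, 0 < δ →
      ∫⁻ x : ℝ, ‖cauchyTransform (fun y => u y) (x + δ * I)‖ₑ ∂μ ≤ M) :
    ∀ᵐ x : ℝ ∂μ, ∃ l, Tendsto (fun ε : ℝ => cauchyTransform (fun y => u y) (x + ε * I))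
      (𝓝[>] 0) (𝓝 l) := by
  set F := cauchyTransform fun y => (u y : ℂ)
  have hI {z : ℂ} (hz : 0 < z.im) : 1 ≤ ‖F z - I‖ := one_le_norm_cauchyTransform_sub_I hu h0 hz
  have hne {z : ℂ} (hz : 0 < z.im) : F z - I ≠ 0 := norm_pos_iff.1 (one_pos.trans_le (hI hz))
  have hdiff : DifferentiableOn ℂ (fun z => (F z - I)⁻¹) {z | 0 < z.im} := fun z hz =>
    (((differentiableAt_cauchyTransform hu.ofReal hz.ne').sub_const I).fun_inv
      (hne hz)).differentiableWithinAt
  have hlim := hμ.ae_le (ae_exists_tendsto_of_norm_le hdiff (C := 1) fun z hz => by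
    rw [norm_inv]
    exact inv_le_one_of_one_le₀ (hI hz))
  have hpos (n : ℕ) : (0 : ℝ) < 1 / (n + 1) := Nat.one_div_pos_of_nat
  have hmeas (n : ℕ) : Measurable fun x : ℝ => ‖F (x + (1 / (n + 1) : ℝ) * I)‖ₑ :=
    (continuous_cauchyTransform_line hu.ofReal (hpos n)).measurable.enorm
  have hFatou : ∀ᵐ x : ℝ ∂μ, liminf (fun n : ℕ => ‖F (x + (1 / (n + 1) : ℝ) * I)‖ₑ) atTop < ∞ := by
    refine ae_lt_top (Measurable.liminf hmeas)
      (ne_top_of_le_ne_top hM ((lintegral_liminf_le hmeas).trans ?_))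
    exact (liminf_le_liminf (Eventually.of_forall fun n => hbound _ (hpos n))).trans_eq
      (liminf_const M)
  filter_upwards [hlim, hFatou] with x ⟨l, hl⟩ hx
  have hl0 : l ≠ 0 := by
    obtain ⟨c, hxc, hc⟩ := exists_between hx
    have hinv : ‖l‖ₑ⁻¹ ≤ c + 1 := by
      refine le_of_tendsto_of_frequently (hl.comp tendsto_one_div_add_one_nhdsGT).enorm.inv
        ((frequently_lt_of_liminf_lt (by isBoundedDefault) hxc).mono fun n hn => ?_)
      simp only [Function.comp_apply]
      rw [enorm_inv (hne (by rw [im_add_mul_I]; exact hpos n)), inv_inv]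
      refine enorm_sub_le.trans (add_le_add hn.le ?_)
      rw [← ofReal_norm, Complex.norm_I, ENNReal.ofReal_one]
    rintro rfl
    simp [hc.ne] at hinv
  refine ⟨l⁻¹ + I, ((hl.inv₀ hl0).add_const I).congr fun ε => ?_⟩
  rw [inv_inv, sub_add_cancel]

lemma ae_exists_tendsto_cauchyTransform_of_nonneg (hu : Integrable u) (h0 : 0 ≤ u)
    (hs : Function.support u ⊆ Ioo (-1) 1) (hN : ezygNorm 1 (fun y => (u y : ℂ)) ≠ ∞) :
    ∀ᵐ x : ℝ ∂μI, ∃ l, Tendsto (fun ε : ℝ => cauchyTransform (fun y => u y) (x + ε * I))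
      (𝓝[>] 0) (𝓝 l) := by
  have hs' : Function.support (fun y => (u y : ℂ)) ⊆ Ioo (-1) 1 := fun y hy =>
    hs (Complex.ofReal_ne_zero.1 hy)
  refine ae_exists_tendsto_cauchyTransform_of_lintegral_le (μ := μI)
    Measure.absolutelyContinuous_restrict hu h0
    (M := ENNReal.ofReal (2 * 2 ^ (1 + 0 : ℝ) * (16 * Real.pi * 2)) *
      ezygNorm (1 + 0) (fun y => (u y : ℂ))) ?_ fun δ hδ => ?_
  · rw [add_zero]
    exact ENNReal.mul_ne_top ENNReal.ofReal_ne_top hN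
  · simpa using lintegral_enorm_cauchyTransform_mul_le hu.ofReal hs' (g := 1) measurable_one
      (hasMomentGrowth_one le_rfl) two_pos.le le_rfl hδ

lemma ae_exists_tendsto_cauchyTransform_ofReal (hu : Integrable u)
    (hs : Function.support u ⊆ Ioo (-1) 1) (hN : ezygNorm 1 (fun y => (u y : ℂ)) ≠ ∞) :
    ∀ᵐ x : ℝ ∂μI, ∃ l, Tendsto (fun ε : ℝ => cauchyTransform (fun y => u y) (x + ε * I))
      (𝓝[>] 0) (𝓝 l) := by
  have hpart {v : ℝ → ℝ} (hv : Integrable v) (h0 : 0 ≤ v) (hvu : ∀ y, v y ≤ |u y|) :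
      ∀ᵐ x : ℝ ∂μI, ∃ l, Tendsto (fun ε : ℝ => cauchyTransform (fun y => v y) (x + ε * I))
        (𝓝[>] 0) (𝓝 l) := by
    refine ae_exists_tendsto_cauchyTransform_of_nonneg hv h0 (fun y hy => hs fun huy => hy ?_)
      (ne_top_of_le_ne_top hN (ezygNorm_mono_ae hv.ofReal.1.restrict hu.ofReal.1.restrict
        (Eventually.of_forall fun y => ?_) 1))
    · exact le_antisymm ((hvu y).trans_eq (by rw [huy, abs_zero])) (h0 y)
    · simpa [abs_of_nonneg (h0 y)] using hvu y
  have hpos : Integrable fun y => (u y)⁺ := hu.pos_part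
  have hneg : Integrable fun y => (u y)⁻ := hu.neg_part
  have hposC : Integrable fun y => (((u y)⁺ : ℝ) : ℂ) := hpos.ofReal
  have hnegC : Integrable fun y => -1 * (((u y)⁻ : ℝ) : ℂ) := hneg.ofReal.const_mul (-1)
  filter_upwards [hpart hpos (fun y => posPart_nonneg _) fun y =>
      sup_le (le_abs_self _) (abs_nonneg _),
    hpart hneg (fun y => negPart_nonneg _) fun y => sup_le (neg_le_abs _) (abs_nonneg _)]
    with x ⟨l, hl⟩ ⟨m, hm⟩
  refine ⟨l + -1 * m, (hl.add (hm.const_mul (-1))).congr' ?_⟩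
  filter_upwards [self_mem_nhdsWithin] with ε hε
  rw [← cauchyTransform_const_mul, ← cauchyTransform_add hposC hnegC (by simpa using ne_of_gt hε)]
  congr 1
  ext y
  rw [Pi.add_apply, neg_one_mul, ← sub_eq_add_neg, ← Complex.ofReal_sub, posPart_sub_negPart]

theorem ae_exists_tendsto_cauchyTransform (hf : Integrable f)
    (hs : Function.support f ⊆ Ioo (-1) 1) (hN : ezygNorm 1 f ≠ ∞) :
    ∀ᵐ x : ℝ ∂μI, ∃ l, Tendsto (fun ε : ℝ => cauchyTransform f (x + ε * I)) (𝓝[>] 0) (𝓝 l) := by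
  have hpart {u : ℝ → ℝ} (hu : Integrable u) (huf : ∀ y, |u y| ≤ ‖f y‖) :
      ∀ᵐ x : ℝ ∂μI, ∃ l, Tendsto (fun ε : ℝ => cauchyTransform (fun y => u y) (x + ε * I))
        (𝓝[>] 0) (𝓝 l) := by
    refine ae_exists_tendsto_cauchyTransform_ofReal hu (fun y hy => hs fun hfy => hy ?_)
      (ne_top_of_le_ne_top hN (ezygNorm_mono_ae hu.ofReal.1.restrict hf.1.restrict
        (Eventually.of_forall fun y => by simpa using huf y) 1))
    exact abs_nonpos_iff.1 ((huf y).trans_eq (by rw [hfy, norm_zero]))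
  filter_upwards [hpart hf.re fun y => Complex.abs_re_le_norm (f y),
    hpart hf.im fun y => Complex.abs_im_le_norm (f y)] with x ⟨l, hl⟩ ⟨m, hm⟩
  refine ⟨l + I * m, (hl.add (hm.const_mul I)).congr' ?_⟩
  filter_upwards [self_mem_nhdsWithin] with ε hε
  exact (cauchyTransform_eq_re_add_im hf (by simpa using (ne_of_gt hε))).symm

end CauchyTransformBoundary

section Plemelj

/-- The difference of the kernels of `F ↦ F (x + iε)` and of the truncated Hilbert transform;
it is an approximation of `-πi` times the identity. -/
def plemeljKernel (ε s : ℝ) : ℂ := ((s : ℂ) + ε * I)⁻¹ - if ε ≤ |s| then (s : ℂ)⁻¹ else 0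

variable {ε : ℝ}

lemma measurable_plemeljKernel (ε : ℝ) : Measurable (plemeljKernel ε) :=
  Measurable.sub (by fun_prop) (Measurable.ite (measurableSet_le measurable_const (by fun_prop))
    (by fun_prop) measurable_const)

lemma norm_plemeljKernel_le (hε : 0 < ε) (s : ℝ) :
    ‖plemeljKernel ε s‖ ≤ 2 * halfPlanePoisson ε s := by
  have hsq : ‖(s : ℂ) + ε * I‖ ^ 2 = s ^ 2 + ε ^ 2 := by
    rw [← Complex.normSq_eq_norm_sq, Complex.normSq_add_mul_I]
  have hle : ‖(s : ℂ) + ε * I‖ ≤ |s| + ε := by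
    refine (norm_add_le _ _).trans_eq ?_
    rw [norm_mul, Complex.norm_I, mul_one, Complex.norm_real, Complex.norm_real,
      Real.norm_eq_abs, Real.norm_of_nonneg hε.le]
  have hpos : 0 < ‖(s : ℂ) + ε * I‖ := by
    refine pos_of_mul_pos_left (b := ‖(s : ℂ) + ε * I‖) ?_ (norm_nonneg _)
    rw [← sq, hsq]
    positivity
  rw [halfPlanePoisson, ← hsq, plemeljKernel]
  generalize hn : ‖(s : ℂ) + ε * I‖ = n at hle hpos ⊢
  split_ifs with h
  · have hs : 0 < |s| := hε.trans_le h
    have hs0 : (s : ℂ) ≠ 0 := Complex.ofReal_ne_zero.2 (abs_pos.1 hs)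
    rw [inv_sub_inv (norm_pos_iff.1 (hn ▸ hpos)) hs0, sub_add_cancel_left, norm_div, norm_neg,
      norm_mul, norm_mul, hn, Complex.norm_I, mul_one, Complex.norm_real, Complex.norm_real,
      Real.norm_of_nonneg hε.le, Real.norm_eq_abs, mul_div_assoc', div_le_div_iff₀ (by positivity)
      (by positivity)]
    have h2 : n ≤ 2 * |s| := by linarith
    calc ε * n ^ 2 = ε * n * n := by ring
      _ ≤ ε * n * (2 * |s|) := by gcongr
      _ = 2 * ε * (n * |s|) := by ring
  · have h2 : n ≤ 2 * ε := by linarith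
    rw [sub_zero, norm_inv, hn, mul_div_assoc', inv_eq_one_div,
      div_le_div_iff₀ hpos (by positivity), one_mul, sq]
    gcongr

lemma integrable_plemeljKernel (hε : 0 < ε) : Integrable (plemeljKernel ε) :=
  ((integrable_halfPlanePoisson hε).const_mul 2).mono'
    (measurable_plemeljKernel ε).aestronglyMeasurable
    (Eventually.of_forall (norm_plemeljKernel_le hε))

lemma plemeljKernel_neg (ε s : ℝ) : plemeljKernel ε (-s) = -conj (plemeljKernel ε s) := by
  have hshift : ((-s : ℝ) + ε * I : ℂ) = -conj (s + ε * I) := by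
    rw [map_add, map_mul, Complex.conj_ofReal, Complex.conj_ofReal, Complex.conj_I]
    push_cast
    ring
  rw [plemeljKernel, plemeljKernel, abs_neg, hshift, map_sub, map_inv₀, inv_neg]
  split_ifs
  · rw [map_inv₀, Complex.conj_ofReal, Complex.ofReal_neg, inv_neg]
    ring
  · rw [map_zero]
    ring

lemma plemeljKernel_im (ε s : ℝ) : (plemeljKernel ε s).im = -halfPlanePoisson ε s := by
  have him := inv_sub_ofReal_im ε s 0
  rw [Complex.ofReal_zero, sub_zero, sub_zero] at him
  rw [plemeljKernel, Complex.sub_im, him]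
  split_ifs
  · rw [← Complex.ofReal_inv, Complex.ofReal_im, sub_zero]
  · rw [Complex.zero_im, sub_zero]

lemma integral_plemeljKernel (hε : 0 < ε) : ∫ s, plemeljKernel ε s = -(Real.pi * I) := by
  have hi := integrable_plemeljKernel hε
  have hodd : ∫ s, plemeljKernel ε s = -conj (∫ s, plemeljKernel ε s) := by
    rw [← integral_conj, ← integral_neg, ← integral_neg_eq_self]
    exact integral_congr_ae (Eventually.of_forall fun s => plemeljKernel_neg ε s)
  have hre : (∫ s, plemeljKernel ε s).re = 0 := by
    have h := congrArg Complex.re hodd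
    rw [Complex.neg_re, Complex.conj_re] at h
    linarith
  have him : (∫ s, plemeljKernel ε s).im = -Real.pi := by
    calc (∫ s, plemeljKernel ε s).im = ∫ s, (plemeljKernel ε s).im := (integral_im hi).symm
      _ = -Real.pi := by
        simp only [plemeljKernel_im]
        rw [integral_neg, integral_halfPlanePoisson hε]
  apply Complex.ext <;> simp [hre, him]

variable {f : ℝ → ℂ}

lemma integrable_plemeljKernel_mul (hf : Integrable f) (hε : 0 < ε) (x : ℝ) :
    Integrable fun y => plemeljKernel ε (x - y) * f y := by
  refine hf.bdd_mul (c := 2 * (1 / ε))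
    ((measurable_plemeljKernel ε).comp (by fun_prop)).aestronglyMeasurable
    (Eventually.of_forall fun y => (norm_plemeljKernel_le hε _).trans ?_)
  rw [halfPlanePoisson]
  gcongr 2 * ?_
  rw [div_le_div_iff₀ (by positivity) hε]
  nlinarith [sq_nonneg (x - y)]

lemma setIntegral_truncated_div_eq (hf : Integrable ((Ioo (-1) 1).indicator f)) (hε : 0 < ε)
    (x : ℝ) :
    ∫ y in {y : ℝ | y ∈ Ioo (-1 : ℝ) 1 ∧ ε ≤ |y - x|}, f y / ((y : ℂ) - x) =
      (∫ y, plemeljKernel ε (x - y) * (Ioo (-1) 1).indicator f y) -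
        cauchyTransform ((Ioo (-1) 1).indicator f) (x + ε * I) := by
  have hS : MeasurableSet {y : ℝ | y ∈ Ioo (-1 : ℝ) 1 ∧ ε ≤ |y - x|} :=
    measurableSet_Ioo.inter (s₂ := {y : ℝ | ε ≤ |y - x|})
      (measurableSet_le measurable_const (by fun_prop))
  have him : ((x : ℂ) + ε * I).im ≠ 0 := by
    rw [im_add_mul_I]
    exact hε.ne'
  rw [cauchyTransform, ← integral_sub (integrable_plemeljKernel_mul hf hε x)
    (integrable_div_sub_ofReal hf him), ← integral_indicator hS]
  refine integral_congr_ae (Eventually.of_forall fun y => ?_)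
  have hshift : ((x - y : ℝ) : ℂ) + ε * I = x + ε * I - y := by
    push_cast
    ring
  simp only [indicator_apply, plemeljKernel, hshift, abs_sub_comm x y, mem_ofPred_eq]
  by_cases hy : y ∈ Ioo (-1 : ℝ) 1
  · by_cases hyx : ε ≤ |y - x|
    · rw [if_pos ⟨hy, hyx⟩, if_pos hy, if_pos hyx, Complex.ofReal_sub, ← neg_sub (y : ℂ) x, inv_neg]
      ring
    · rw [if_neg fun h => hyx h.2, if_pos hy, if_neg hyx]
      ring
  · rw [if_neg fun h => hy h.1, if_neg hy]
    ring

theorem ae_tendsto_cauchyTransform_FHT (hf : AEStronglyMeasurable f μI) (hN : ezygNorm 1 f ≠ ∞) :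
    ∀ᵐ x : ℝ ∂μI, Tendsto
      (fun ε : ℝ => cauchyTransform ((Ioo (-1) 1).indicator f) (x + ε * I)) (𝓝[>] 0)
      (𝓝 (-Real.pi * (FHT f x + I * f x))) := by
  set f₁ := (Ioo (-1 : ℝ) 1).indicator f with hf₁_def
  have hi : Integrable f₁ := (integrable_indicator_iff measurableSet_Ioo).2
    (integrable_of_ezygNorm_ne_top zero_le_one hf hN)
  have hN₁ : ezygNorm 1 f₁ ≠ ∞ := ne_top_of_le_ne_top hN (ezygNorm_mono_ae hi.1.restrict hf
    (Eventually.of_forall fun x => norm_indicator_le_norm_self f x) 1)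
  have hmem : ∀ᵐ x ∂μI, x ∈ Ioo (-1 : ℝ) 1 := ae_restrict_mem measurableSet_Ioo
  have hpi : (Real.pi : ℂ) ≠ 0 := Complex.ofReal_ne_zero.2 Real.pi_ne_zero
  filter_upwards [ae_exists_tendsto_cauchyTransform hi support_indicator_subset hN₁,
    (Measure.absolutelyContinuous_restrict (μ := volume)).ae_le
      (ae_tendsto_lintegral_halfPlanePoisson_enorm_sub le_rfl (memLp_one_iff_integrable.2 hi)),
    hmem] with x ⟨l, hl⟩ hx hxI
  have hκ : Tendsto (fun ε : ℝ => ∫ y, plemeljKernel ε (x - y) * f₁ y) (𝓝[>] 0)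
      (𝓝 (-(Real.pi * I) * f₁ x)) :=
    tendsto_integral_mul_of_norm_le_halfPlanePoisson hx two_pos.le
      (fun ε hε y => norm_plemeljKernel_le hε _)
      (fun ε hε => (integrable_plemeljKernel hε).comp_sub_left x)
      (fun ε hε => integrable_plemeljKernel_mul hi hε x)
      (fun ε hε => by rw [integral_sub_left_eq_self (plemeljKernel ε), integral_plemeljKernel hε])
  have hFHT : FHT f x = (Real.pi : ℂ)⁻¹ * (-(Real.pi * I) * f₁ x - l) := by
    refine Tendsto.limUnder_eq (((hκ.sub hl).const_mul _).congr' ?_)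
    filter_upwards [self_mem_nhdsWithin] with ε hε
    rw [setIntegral_truncated_div_eq hi hε]
  have hl_eq : l = -Real.pi * (FHT f x + I * f x) := by
    rw [hFHT, hf₁_def, indicator_of_mem hxI]
    field_simp
    ring
  rwa [← hl_eq]

end Plemelj

/-! ### Weights norming the Zygmund space -/

section SuperlevelRank

variable {X : Type*} [MeasurableSpace X] {μ : Measure X} {φ : X → ℝ}

/-- The mass of the superlevel set of `φ` through `x`. Up to ties of `φ` it is uniformly
distributed, and it turns a function on `(0, μ univ)` into one on `X` arranged like `φ`. -/
def superlevelRank (μ : Measure X) (φ : X → ℝ) (x : X) : ℝ := μ.real {y | φ x ≤ φ y}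

variable [IsFiniteMeasure μ]

lemma antitone_measureReal_le (φ : X → ℝ) : Antitone fun l => μ.real {y | l ≤ φ y} :=
  fun _ _ hlm => measureReal_mono fun _ hy => hlm.trans hy

lemma measurable_superlevelRank (hφ : Measurable φ) : Measurable (superlevelRank μ φ) :=
  (antitone_measureReal_le φ).measurable.comp hφ

lemma superlevelRank_le (φ : X → ℝ) (x : X) : superlevelRank μ φ x ≤ μ.real univ :=
  measureReal_mono (subset_univ _)

-- Inner regularity reduces to compact sets of values of `φ`, which have a least element.
lemma measure_superlevelRank_preimage_le (hφ : Measurable φ) {S : Set ℝ} (hS : MeasurableSet S)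
    {c : ℝ≥0∞} (hc : ∀ s ∈ S, s ≤ μ.real univ → ENNReal.ofReal s ≤ c) :
    μ (superlevelRank μ φ ⁻¹' S) ≤ c := by
  set D : ℝ → ℝ := fun l => μ.real {y | l ≤ φ y}
  have hDS : MeasurableSet (D ⁻¹' S) := (antitone_measureReal_le φ).measurable hS
  have : IsFiniteMeasure (μ.map φ) := Measure.isFiniteMeasure_map μ φ
  rw [show superlevelRank μ φ ⁻¹' S = φ ⁻¹' (D ⁻¹' S) from rfl, ← Measure.map_apply hφ hDS,
    hDS.measure_eq_iSup_isCompact]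
  refine iSup₂_le fun K hKS => iSup_le fun hK => ?_
  obtain rfl | hne := K.eq_empty_or_nonempty
  · rw [measure_empty]
    exact zero_le
  obtain ⟨a, haK, ha⟩ := hK.exists_isLeast hne
  calc (μ.map φ) K ≤ (μ.map φ) (Ici a) := measure_mono fun y hy => ha hy
    _ = ENNReal.ofReal (D a) := by
        rw [Measure.map_apply hφ measurableSet_Ici, ofReal_measureReal]
        rfl
    _ ≤ c := hc _ (hKS haK) (measureReal_mono (subset_univ _))

lemma ae_superlevelRank_pos (hφ : Measurable φ) : ∀ᵐ x ∂μ, 0 < superlevelRank μ φ x := by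
  have hzero : μ (superlevelRank μ φ ⁻¹' Iic 0) ≤ 0 :=
    measure_superlevelRank_preimage_le hφ measurableSet_Iic fun s hs _ =>
      (ENNReal.ofReal_eq_zero.2 hs).le
  filter_upwards [measure_eq_zero_iff_ae_notMem.1 (le_antisymm hzero zero_le)] with x hx
  exact not_le.1 hx

lemma lintegral_comp_superlevelRank_le (hφ : Measurable φ) {ψ : ℝ → ℝ} (hψ : Measurable ψ)
    (hanti : AntitoneOn ψ (Ioc 0 (μ.real univ))) (h0 : ∀ s ∈ Ioc 0 (μ.real univ), 0 ≤ ψ s) :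
    ∫⁻ x, ENNReal.ofReal (ψ (superlevelRank μ φ x)) ∂μ ≤
      ∫⁻ s in Ioo 0 (μ.real univ), ENNReal.ofReal (ψ s) := by
  set M := μ.real univ
  have hpos := ae_superlevelRank_pos (μ := μ) hφ
  rw [lintegral_eq_lintegral_meas_lt μ
      (hpos.mono fun x hx => h0 _ ⟨hx, superlevelRank_le φ x⟩)
      (hψ.comp (measurable_superlevelRank hφ)).aemeasurable,
    lintegral_eq_lintegral_meas_lt (volume.restrict (Ioo 0 M))
      ((ae_restrict_mem measurableSet_Ioo).mono fun s hs => h0 s (Ioo_subset_Ioc_self hs))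
      hψ.aemeasurable]
  refine lintegral_mono fun t => ?_
  have hlt : MeasurableSet {s | t < ψ s} := measurableSet_lt measurable_const hψ
  refine measure_superlevelRank_preimage_le hφ hlt fun s (hs : t < ψ s) hsM => ?_
  rw [Measure.restrict_apply hlt, ← sub_zero s, ← Real.volume_Ioo]
  exact measure_mono fun r hr => ⟨hs.trans_le (hanti ⟨hr.1, hr.2.le.trans hsM⟩
    ⟨hr.1.trans hr.2, hsM⟩ hr.2.le), hr.1, hr.2.trans_le hsM⟩

end SuperlevelRank

section Duality

variable {β : ℝ}

lemma four_mul_rpow_le (hβ : 0 ≤ β) {k : ℕ} (hk : 1 ≤ k) :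
    2 * (1 + 2 * (β * (2 * k : ℕ) + 1)) ^ (β * (2 * k : ℕ)) * 2 ≤
      (4 * (4 * (β + 1)) ^ β * k ^ β) ^ (2 * k) := by
  have hk' : (1 : ℝ) ≤ k := Nat.one_le_cast.2 hk
  have hbase : 1 + 2 * (β * (2 * k : ℕ) + 1) ≤ 4 * (β + 1) * k := by
    push_cast
    nlinarith
  calc _ = 4 * ((1 + 2 * (β * (2 * k : ℕ) + 1)) ^ β) ^ (2 * k) := by
        rw [Real.rpow_mul_natCast (by positivity)]
        ring
    _ ≤ 4 ^ (2 * k) * ((4 * (β + 1) * k) ^ β) ^ (2 * k) := by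
        gcongr
        exact le_self_pow₀ (by norm_num) (by omega)
    _ = _ := by
        rw [Real.mul_rpow (by positivity) (by positivity), ← mul_pow, mul_assoc]

lemma hasMomentGrowth_logWeight_superlevelRank (hβ : 0 ≤ β) {φ : ℝ → ℝ} (hφ : Measurable φ) :
    HasMomentGrowth μI (4 * (4 * (β + 1)) ^ β) β
      fun x => ENNReal.ofReal (logWeight (superlevelRank μI φ x) ^ β) := by
  intro k hk
  have huniv : μI.real univ = 2 := by rw [measureReal_def, μI_univ, ENNReal.toReal_ofNat]
  have hexp : 0 ≤ β * (2 * k : ℕ) := by positivity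
  calc _ = ∫⁻ x, ENNReal.ofReal (logWeight (superlevelRank μI φ x) ^ (β * (2 * k : ℕ))) ∂μI := by
        refine lintegral_congr_ae ?_
        filter_upwards [ae_superlevelRank_pos (μ := μI) hφ] with x hx
        have hL := one_le_logWeight hx (huniv ▸ superlevelRank_le φ x)
        rw [← ENNReal.ofReal_pow (by positivity), Real.rpow_mul_natCast (by positivity)]
    _ ≤ ∫⁻ s in Ioo 0 2, ENNReal.ofReal (logWeight s ^ (β * (2 * k : ℕ))) := by
        rw [← huniv]
        refine lintegral_comp_superlevelRank_le (ψ := fun s => logWeight s ^ (β * (2 * k : ℕ)))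
          hφ (by fun_prop) ?_ ?_ <;> rw [huniv]
        · exact fun s hs t ht hst => logWeight_rpow_le hexp hs.1 hst ht.2
        · exact fun s hs => logWeight_rpow_nonneg hs.1 hs.2
    _ ≤ ENNReal.ofReal (2 * (1 + 2 * (β * (2 * k : ℕ) + 1)) ^ (β * (2 * k : ℕ)) * 2) := by
        refine (lintegral_logWeight_rpow_le hexp two_pos.le le_rfl).trans_eq ?_
        rw [logWeight_two, Real.one_rpow, mul_one]
    _ ≤ _ := by
        rw [← ENNReal.ofReal_pow (by positivity)]
        exact ENNReal.ofReal_le_ofReal (four_mul_rpow_le hβ hk)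

lemma ezygNorm_le_lintegral_enorm_mul_logWeight_superlevelRank (hβ : 0 ≤ β) {f : ℝ → ℂ}
    (hf : StronglyMeasurable f) :
    ezygNorm β f ≤ ENNReal.ofReal (2 * (1 + 2 * (β + 1)) ^ β) * ∫⁻ x, ‖f x‖ₑ *
      ENNReal.ofReal (logWeight (superlevelRank μI (fun x => ‖f x‖) x) ^ β) ∂μI := by
  have hφ : Measurable fun x => ‖f x‖ := hf.norm.measurable
  have hd := measurable_superlevelRank (μ := μI) hφ
  refine (ezygNorm_le_lintegral_distFun_mul hf.aestronglyMeasurable hβ).trans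
    (mul_le_mul_right ?_ _)
  rw [lintegral_enorm_mul_eq_lintegral_setLIntegral hf.aestronglyMeasurable (by fun_prop)]
  refine lintegral_mono fun l => ?_
  calc _ = ∫⁻ _ in {x | l < ‖f x‖}, ENNReal.ofReal (logWeight (distFun f l) ^ β) ∂μI := by
        rw [setLIntegral_const, ENNReal.ofReal_mul (distFun_nonneg f l), ofReal_distFun, mul_comm]
    _ ≤ _ := by
        refine lintegral_mono_ae ?_
        filter_upwards [ae_restrict_of_ae (ae_superlevelRank_pos (μ := μI) hφ),
          ae_restrict_mem (measurableSet_lt measurable_const hφ)] with x hx hxl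
        have hrank : superlevelRank μI (fun x => ‖f x‖) x ≤ distFun f l := by
          rw [← ENNReal.ofReal_le_ofReal_iff (distFun_nonneg f l), ofReal_distFun, superlevelRank,
            ofReal_measureReal]
          exact measure_mono fun y hy => lt_of_lt_of_le hxl hy
        exact ENNReal.ofReal_le_ofReal (logWeight_rpow_le hβ hx hrank (distFun_le_two f l))

theorem exists_hasMomentGrowth_ezygNorm_le (hβ : 0 ≤ β) {f : ℝ → ℂ}
    (hf : AEStronglyMeasurable f μI) :
    ∃ g : ℝ → ℝ≥0, Measurable g ∧
      HasMomentGrowth μI (4 * (4 * (β + 1)) ^ β) β (fun x => (g x : ℝ≥0∞)) ∧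
      ezygNorm β f ≤ ENNReal.ofReal (2 * (1 + 2 * (β + 1)) ^ β) * ∫⁻ x, ‖f x‖ₑ * g x ∂μI := by
  have hm := hf.stronglyMeasurable_mk
  have hφ : Measurable fun x => ‖hf.mk f x‖ := hm.norm.measurable
  have hd := measurable_superlevelRank (μ := μI) hφ
  refine ⟨fun x => (logWeight (superlevelRank μI (fun x => ‖hf.mk f x‖) x) ^ β).toNNReal,
    by fun_prop, hasMomentGrowth_logWeight_superlevelRank hβ hφ, ?_⟩
  calc ezygNorm β f ≤ ezygNorm β (hf.mk f) := ezygNorm_mono_ae hf hm.aestronglyMeasurable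
        (hf.ae_eq_mk.mono fun x hx => (congrArg norm hx).le) β
    _ ≤ _ := ezygNorm_le_lintegral_enorm_mul_logWeight_superlevelRank hβ hm
    _ = _ := by
        congr 1
        exact lintegral_congr_ae (hf.ae_eq_mk.mono fun x hx => by simp only [← hx]; rfl)

end Duality

/-! ### Boundedness of the finite Hilbert transform -/

section FHTBound

variable {f : ℝ → ℂ} {α β : ℝ}

lemma aestronglyMeasurable_pi_mul_FHT_add (hf : AEStronglyMeasurable f μI)
    (hN : ezygNorm 1 f ≠ ∞) :
    AEStronglyMeasurable (fun x => -Real.pi * (FHT f x + I * f x)) μI := by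
  have hi : Integrable ((Ioo (-1 : ℝ) 1).indicator f) :=
    (integrable_indicator_iff measurableSet_Ioo).2 (integrable_of_ezygNorm_ne_top zero_le_one hf hN)
  refine aestronglyMeasurable_of_tendsto_ae atTop
    (f := fun (n : ℕ) (x : ℝ) =>
      cauchyTransform ((Ioo (-1) 1).indicator f) (x + (1 / (n + 1) : ℝ) * I))
    (fun n => (continuous_cauchyTransform_line hi Nat.one_div_pos_of_nat).aestronglyMeasurable) ?_
  exact (ae_tendsto_cauchyTransform_FHT hf hN).mono fun x hx =>
    hx.comp tendsto_one_div_add_one_nhdsGT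

lemma aestronglyMeasurable_FHT (hf : AEStronglyMeasurable f μI) (hN : ezygNorm 1 f ≠ ∞) :
    AEStronglyMeasurable (FHT f) μI := by
  have hpi : (Real.pi : ℂ) ≠ 0 := Complex.ofReal_ne_zero.2 Real.pi_ne_zero
  refine (((aestronglyMeasurable_pi_mul_FHT_add hf hN).const_mul (-Real.pi : ℂ)⁻¹).sub
    (hf.const_mul I)).congr (Eventually.of_forall fun x => ?_)
  simp only [Pi.sub_apply]
  rw [inv_mul_cancel_left₀ (neg_ne_zero.2 hpi), add_sub_cancel_right]

lemma lintegral_enorm_pi_mul_FHT_add_mul_le (hβ : 0 ≤ β) (hf : AEStronglyMeasurable f μI)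
    (hN : ezygNorm (1 + β) f ≠ ∞) {g : ℝ → ℝ≥0} (hg : Measurable g) {B : ℝ} (hB : 0 ≤ B)
    (hgrowth : HasMomentGrowth μI B β fun x => (g x : ℝ≥0∞)) :
    ∫⁻ x, ‖-Real.pi * (FHT f x + I * f x)‖ₑ * g x ∂μI ≤
      ENNReal.ofReal (2 * 2 ^ (1 + β) * (16 * Real.pi * B)) * ezygNorm (1 + β) f := by
  have hN1 : ezygNorm 1 f ≠ ∞ :=
    ne_top_of_le_ne_top hN (ezygNorm_mono_exponent (le_add_of_nonneg_right hβ) f)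
  set f₁ := (Ioo (-1 : ℝ) 1).indicator f
  have hi : Integrable f₁ := (integrable_indicator_iff measurableSet_Ioo).2
    (integrable_of_ezygNorm_ne_top zero_le_one hf hN1)
  have hf₁ : ezygNorm (1 + β) f₁ ≤ ezygNorm (1 + β) f := ezygNorm_mono_ae hi.1.restrict hf
    (Eventually.of_forall fun x => norm_indicator_le_norm_self f x) _
  have hpos (n : ℕ) : (0 : ℝ) < 1 / (n + 1) := Nat.one_div_pos_of_nat
  have hmeas (n : ℕ) :
      Measurable fun x : ℝ => ‖cauchyTransform f₁ (x + (1 / (n + 1) : ℝ) * I)‖ₑ * g x :=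
    (continuous_cauchyTransform_line hi (hpos n)).measurable.enorm.mul hg.coe_nnreal_ennreal
  calc _ = ∫⁻ x, liminf (fun n : ℕ =>
          ‖cauchyTransform f₁ (x + (1 / (n + 1) : ℝ) * I)‖ₑ * g x) atTop ∂μI := by
        refine lintegral_congr_ae ?_
        filter_upwards [ae_tendsto_cauchyTransform_FHT hf hN1] with x hx
        exact (ENNReal.Tendsto.mul_const (hx.comp tendsto_one_div_add_one_nhdsGT).enorm
          (Or.inr ENNReal.coe_ne_top)).liminf_eq.symm
    _ ≤ liminf (fun n : ℕ => ∫⁻ x : ℝ,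
          ‖cauchyTransform f₁ (x + (1 / (n + 1) : ℝ) * I)‖ₑ * g x ∂μI) atTop :=
        lintegral_liminf_le hmeas
    _ ≤ _ := by
        refine (liminf_le_liminf (Eventually.of_forall fun n =>
          (lintegral_enorm_cauchyTransform_mul_le hi support_indicator_subset hg hgrowth hB hβ
            (hpos n)).trans (mul_le_mul_right hf₁ _))).trans_eq (liminf_const _)

lemma norm_FHT_le (f : ℝ → ℂ) (x : ℝ) :
    ‖FHT f x‖ ≤ ‖-Real.pi * (FHT f x + I * f x)‖ + ‖f x‖ := by
  calc ‖FHT f x‖ = ‖(FHT f x + I * f x) - I * f x‖ := by rw [add_sub_cancel_right]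
    _ ≤ ‖FHT f x + I * f x‖ + ‖I * f x‖ := norm_sub_le _ _
    _ ≤ _ := by
        rw [norm_mul I, Complex.norm_I, one_mul, norm_mul, norm_neg, Complex.norm_real,
          Real.norm_of_nonneg Real.pi_pos.le]
        gcongr
        exact le_mul_of_one_le_left (norm_nonneg _) (by linarith [Real.pi_gt_three])

lemma lintegral_enorm_FHT_mul_le (hβ : 0 ≤ β) (hf : AEStronglyMeasurable f μI)
    (hN : ezygNorm (1 + β) f ≠ ∞) {g : ℝ → ℝ≥0} (hg : Measurable g) {B : ℝ} (hB : 0 ≤ B)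
    (hgrowth : HasMomentGrowth μI B β fun x => (g x : ℝ≥0∞)) :
    ∫⁻ x, ‖FHT f x‖ₑ * g x ∂μI ≤
      ENNReal.ofReal (2 * 2 ^ (1 + β) * (16 * Real.pi * B) + 2 * 2 ^ β * B) *
        ezygNorm (1 + β) f := by
  have hN1 : ezygNorm 1 f ≠ ∞ :=
    ne_top_of_le_ne_top hN (ezygNorm_mono_exponent (le_add_of_nonneg_right hβ) f)
  have hg' : AEMeasurable (fun x => (g x : ℝ≥0∞)) μI := hg.coe_nnreal_ennreal.aemeasurable
  have henorm (x : ℝ) : ‖FHT f x‖ₑ ≤ ‖-Real.pi * (FHT f x + I * f x)‖ₑ + ‖f x‖ₑ := by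
    simpa only [ofReal_norm, ENNReal.ofReal_add, norm_nonneg]
      using ENNReal.ofReal_le_ofReal (norm_FHT_le f x)
  calc _ ≤ ∫⁻ x, (‖-Real.pi * (FHT f x + I * f x)‖ₑ * g x + ‖f x‖ₑ * g x) ∂μI :=
        lintegral_mono fun x => by
          simp only [← add_mul]
          exact mul_le_mul_left (henorm x) _
    _ = ∫⁻ x, ‖-Real.pi * (FHT f x + I * f x)‖ₑ * g x ∂μI + ∫⁻ x, ‖f x‖ₑ * g x ∂μI :=
        lintegral_add_left' ((aestronglyMeasurable_pi_mul_FHT_add hf hN1).enorm.mul hg') _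
    _ ≤ ENNReal.ofReal (2 * 2 ^ (1 + β) * (16 * Real.pi * B)) * ezygNorm (1 + β) f +
          ENNReal.ofReal (2 * 2 ^ β * B) * ezygNorm (1 + β) f :=
        add_le_add (lintegral_enorm_pi_mul_FHT_add_mul_le hβ hf hN hg hB hgrowth)
          ((hgrowth.lintegral_enorm_mul_le hg' hB hβ hf).trans
            (mul_le_mul_right (ezygNorm_mono_exponent (le_add_of_nonneg_left zero_le_one) f) _))
    _ = _ := by rw [← add_mul, ← ENNReal.ofReal_add (by positivity) (by positivity)]

theorem exists_ezygNorm_FHT_le (hβ : 0 ≤ β) :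
    ∃ C : ℝ, 0 < C ∧ ∀ f : ℝ → ℂ, AEStronglyMeasurable f μI → ezygNorm (1 + β) f ≠ ∞ →
      AEStronglyMeasurable (FHT f) μI ∧
        ezygNorm β (FHT f) ≤ ENNReal.ofReal C * ezygNorm (1 + β) f := by
  set B : ℝ := 4 * (4 * (β + 1)) ^ β
  have hB : 0 < B := by positivity
  refine ⟨2 * (1 + 2 * (β + 1)) ^ β *
    (2 * 2 ^ (1 + β) * (16 * Real.pi * B) + 2 * 2 ^ β * B), by positivity, fun f hf hN => ?_⟩
  have hN1 : ezygNorm 1 f ≠ ∞ :=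
    ne_top_of_le_ne_top hN (ezygNorm_mono_exponent (le_add_of_nonneg_right hβ) f)
  have hFHT := aestronglyMeasurable_FHT hf hN1
  obtain ⟨g, hg, hgrowth, hle⟩ := exists_hasMomentGrowth_ezygNorm_le hβ hFHT
  refine ⟨hFHT, hle.trans ?_⟩
  rw [ENNReal.ofReal_mul (p := 2 * (1 + 2 * (β + 1)) ^ β) (by positivity), mul_assoc]
  exact mul_le_mul_right (lintegral_enorm_FHT_mul_le hβ hf hN hg hB.le hgrowth) _

lemma aestronglyMeasurable_decRearr_mul (hf : AEStronglyMeasurable f μI) (α : ℝ) :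
    AEStronglyMeasurable (fun t => decRearr f t * logWeight t ^ α)
      (volume.restrict (Ioo (0 : ℝ) 2)) := by
  have hanti : AntitoneOn (decRearr f) (Ioo 0 2) := fun s hs t _ hst =>
    csInf_le_csInf ⟨0, fun l hl => hl.1⟩ (exists_distFun_le hf hs.1)
      fun l hl => ⟨hl.1, hl.2.trans hst⟩
  have hlog : Measurable fun t => logWeight t ^ α := by fun_prop
  exact ((aemeasurable_restrict_of_antitoneOn measurableSet_Ioo hanti).mul
    hlog.aemeasurable).aestronglyMeasurable

lemma ae_decRearr_mul_nonneg (f : ℝ → ℂ) (α : ℝ) :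
    0 ≤ᵐ[volume.restrict (Ioo (0 : ℝ) 2)] fun t => decRearr f t * logWeight t ^ α :=
  (ae_restrict_mem measurableSet_Ioo).mono fun t ht =>
    mul_nonneg (decRearr_nonneg f t) (logWeight_rpow_nonneg ht.1 ht.2.le)

lemma memZyg_iff : MemZyg α f ↔ AEStronglyMeasurable f μI ∧ ezygNorm α f ≠ ∞ :=
  and_congr_right fun hf => (and_iff_right (aestronglyMeasurable_decRearr_mul hf α)).trans
    ((hasFiniteIntegral_iff_ofReal (ae_decRearr_mul_nonneg f α)).trans lt_top_iff_ne_top)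

lemma MemZyg.ofReal_zygNorm (hf : MemZyg α f) : ENNReal.ofReal (zygNorm α f) = ezygNorm α f :=
  ofReal_integral_eq_lintegral_ofReal hf.2 (ae_decRearr_mul_nonneg f α)

lemma zygNorm_nonneg (f : ℝ → ℂ) (α : ℝ) : 0 ≤ zygNorm α f :=
  integral_nonneg_of_ae (ae_decRearr_mul_nonneg f α)

end FHTBound

/-- For every `β ≥ 0` the finite Hilbert transform maps `L(log L)^{1+β}(-1,1)` boundedly
into `L(log L)^β(-1,1)`. -/
theorem FHT_Zygmund_bound (β : ℝ) (hβ : 0 ≤ β) :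
    ∃ C : ℝ, 0 < C ∧ ∀ f : ℝ → ℂ, MemZyg (1 + β) f →
      MemZyg β (FHT f) ∧ zygNorm β (FHT f) ≤ C * zygNorm (1 + β) f := by
  obtain ⟨C, hC, hbound⟩ := exists_ezygNorm_FHT_le hβ
  refine ⟨C, hC, fun f hf => ?_⟩
  obtain ⟨hfm, hfN⟩ := memZyg_iff.1 hf
  obtain ⟨hTm, hT⟩ := hbound f hfm hfN
  have hTf : MemZyg β (FHT f) :=
    memZyg_iff.2 ⟨hTm, ne_top_of_le_ne_top (ENNReal.mul_ne_top ENNReal.ofReal_ne_top hfN) hT⟩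
  refine ⟨hTf, ?_⟩
  rw [← ENNReal.ofReal_le_ofReal_iff (mul_nonneg hC.le (zygNorm_nonneg f _)),
    ENNReal.ofReal_mul hC.le, hTf.ofReal_zygNorm, hf.ofReal_zygNorm]
  exact hT
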